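/- arXiv:0706.0089 — 2 statements merged into one kernel-verified Lean document; each statement's English description precedes it below -/
import Mathlib

section
/- Let n ≥ 2 and fix a permutation σ_O of {0,…,n−1}. Then the Λ-linear endomorphism ∂̃ of C̃ satisfies ∂̃ ∘ ∂̃ = 0; that is, (C̃, ∂̃) is a chain complex of Λ-modules. -/
open Equiv
open scoped Classical

/-- Generator `z` as an element of the free group. -/
def zF (n : ℕ) : FreeGroup (Fin (n-1) ⊕ Unit) := FreeGroup.of (Sum.inr ())

/-- Generator `τ̃ᵢ` as an element of the free group. -/
def tF (n : ℕ) (i : Fin (n-1)) : FreeGroup (Fin (n-1) ⊕ Unit) := FreeGroup.of (Sum.inl i)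

/-- Relations of the spin extension of the symmetric group. -/
def spinRels (n : ℕ) : Set (FreeGroup (Fin (n-1) ⊕ Unit)) :=
  {zF n * zF n} ∪
  {w | ∃ i : Fin (n-1), w = zF n * tF n i * (tF n i * zF n)⁻¹} ∪
  {w | ∃ i : Fin (n-1), w = tF n i * tF n i * (zF n)⁻¹} ∪
  {w | ∃ i j : Fin (n-1), 1 < |(i : ℤ) - (j : ℤ)| ∧ w = tF n i * tF n j * (zF n * tF n j * tF n i)⁻¹} ∪
  {w | ∃ i j : Fin (n-1), (j : ℕ) = (i : ℕ) + 1 ∧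
        w = tF n i * tF n j * tF n i * (tF n j * tF n i * tF n j)⁻¹}

/-- The spin extension `S̃ₙ` of the symmetric group, as a presented group. -/
abbrev SpinSym (n : ℕ) := PresentedGroup (spinRels n)

/-- The central element `z` of `S̃ₙ`. -/
def zt (n : ℕ) : SpinSym n := PresentedGroup.of (Sum.inr ())

/-- The generator `τ̃ᵢ` of `S̃ₙ`. -/
def tt (n : ℕ) (i : Fin (n-1)) : SpinSym n := PresentedGroup.of (Sum.inl i)

/-- `i` as an element of `Fin n`. -/
def finL (n : ℕ) (i : Fin (n-1)) : Fin n := ⟨i, by have := i.2; omega⟩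

/-- `i+1` as an element of `Fin n`. -/
def finR (n : ℕ) (i : Fin (n-1)) : Fin n := ⟨(i : ℕ) + 1, by have := i.2; omega⟩

/-- `τ̃ₖ` for a natural number index, `1` out of range. -/
def ttN (n : ℕ) (k : ℕ) : SpinSym n := if h : k < n - 1 then tt n ⟨k, h⟩ else 1

/-- For `i ≤ j`, the word `τ̃ᵢ·τ̃ᵢ₊₁⋯τ̃ⱼ₋₂·τ̃ⱼ₋₁·τ̃ⱼ₋₂⋯τ̃ᵢ₊₁·τ̃ᵢ` (equal to `1` when `i = j`). -/
def ttilCore (n i j : ℕ) : SpinSym n :=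
  (((List.range' i (j - i)) ++ (List.range' i (j - 1 - i)).reverse).map (ttN n)).prod

/-- The lifted transpositions `τ̃_{i,j}`, with `τ̃_{j,i} = z·τ̃_{i,j}` for `i < j`,
and `τ̃_{k,k} = 1`. -/
def ttil (n i j : ℕ) : SpinSym n := if j < i then zt n * ttilCore n j i else ttilCore n i j

/-- The ground ring `Λ = ℤ[U_0, …, U_{n-1}]`. -/
abbrev Lam (n : ℕ) := MvPolynomial (Fin n) ℤ

/-- Emptiness of the rectangle `r(x; a, b)` on the toroidal grid determined by the
generator `x`: no `k ∉ {a, b}` lies in the open cyclic interval from `a` to `b`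
with `x k` in the open cyclic interval from `x a` to `x b`. -/
def RectEmpty (n : ℕ) (x : Equiv.Perm (Fin n)) (a b : Fin n) : Prop :=
  ∀ k : Fin n, k ≠ a → k ≠ b →
    ¬((k - a).val < (b - a).val ∧ (x k - x a).val < (x b - x a).val)

/-- `cntMark n σ x a b m = 1` if the marking placed (by `σ`) in column `m`, row `σ m`
lies in the rectangle `r(x; a, b)`, and `0` otherwise. -/
def cntMark (n : ℕ) (σ x : Equiv.Perm (Fin n)) (a b m : Fin n) : ℕ :=
  if (m - a).val < (b - a).val ∧ (σ m - x a).val < (x b - x a).val then 1 else 0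

/-- The monomial `∏ₘ Uₘ^{Oₘ(r(x;a,b))}` in `Λ`. -/
noncomputable def Umon (n : ℕ) (σO x : Equiv.Perm (Fin n)) (a b : Fin n) : Lam n :=
  ∏ m : Fin n, (MvPolynomial.X m) ^ (cntMark n σO x a b m)

/-- The relation `z + 1 = 0` on the monoid algebra `Λ[S̃ₙ]`. -/
def spinAlgRel (n : ℕ) :
    MonoidAlgebra (Lam n) (SpinSym n) → MonoidAlgebra (Lam n) (SpinSym n) → Prop :=
  fun u v => u = MonoidAlgebra.of (Lam n) (SpinSym n) (zt n) + 1 ∧ v = 0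

/-- The module `C̃`, the quotient of the monoid algebra `Λ[S̃ₙ]` by the two-sided
ideal generated by `z + 1`. -/
abbrev Ctil (n : ℕ) := RingQuot (spinAlgRel n)

/-- The class `[g] ∈ C̃` of a group element `g ∈ S̃ₙ`. -/
noncomputable def cls (n : ℕ) (g : SpinSym n) : Ctil n :=
  RingQuot.mkAlgHom (Lam n) (spinAlgRel n) (MonoidAlgebra.of (Lam n) (SpinSym n) g)

/-! Write `s = (a b)`. The Hurwitz move `((a, b), (c, d)) ↦ ((s c, s d), (a, b))` turns a
juxtaposition of two rectangles into another one with the same endpoints. If the rectangles are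
empty and have at least three corner columns in total, then either the move or its inverse, but not
both unless they agree, yields empty rectangles again. These cover the same squares with the same
multiplicities, so the weight is unchanged, and the two terms of `∂̃²[g]` cancel because
`τ̃_{a,b} τ̃_{c,d} = z τ̃_{s c, s d} τ̃_{a,b}` and `z` acts as `-1`.

The remaining pairs of empty rectangles form annuli: a column has the form `((a, b), (a, b))`, a row
the form `((a, b), (b, a))`. The column and the row through the marking `O_m` both have weight
`U_m`, and they cancel because `τ̃_{a,b}² = z` while `τ̃_{a,b} τ̃_{b,a} = 1`. -/

section CyclicIntervals

theorem sbtw_swap_right_iff_not {α : Type*} [CircularOrder α] {a b c : α} (hab : a ≠ b)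
    (hac : a ≠ c) (hbc : b ≠ c) : sbtw a c b ↔ ¬sbtw a b c := by
  refine ⟨fun h h' => sbtw_asymm h' h.cyclic_left, fun h => ?_⟩
  rw [sbtw_iff_not_btw]
  intro h'
  rcases (btw_iff_not_sbtw.2 h).antisymm (btw_cyclic_right h') with
    h | h | h
  exacts [hbc h.symm, hab h.symm, hac h]

theorem sbtw_perm_iff {α : Type*} [CircularOrder α] {a b c : α} (hab : a ≠ b) (hac : a ≠ c)
    (hbc : b ≠ c) :
    (sbtw b c a ↔ sbtw a b c) ∧ (sbtw c a b ↔ sbtw a b c) ∧ (sbtw a c b ↔ ¬sbtw a b c) ∧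
      (sbtw b a c ↔ ¬sbtw a b c) ∧ (sbtw c b a ↔ ¬sbtw a b c) := by
  have h := sbtw_swap_right_iff_not hab hac hbc
  exact ⟨sbtw_cyclic, sbtw_cyclic.symm, h, sbtw_cyclic.symm.trans h, sbtw_cyclic.trans h⟩

theorem sbtw_of_sbtw_of_not_sbtw {α : Type*} [CircularOrder α] {a b c d : α} (hbc : b ≠ c)
    (hbd : b ≠ d) (h : sbtw c a d) (h' : ¬sbtw c b d) : sbtw a d b ∧ sbtw b c a := by
  have hcd : c ≠ d := by rintro rfl; exact sbtw_irrefl_left_right h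
  have hcdb : sbtw c d b := (sbtw_swap_right_iff_not hbc.symm hcd hbd).2 h'
  exact ⟨(sbtw_trans_right hcdb.cyclic_left h.cyclic_right).cyclic_right,
    (sbtw_trans_right h hcdb).cyclic_right⟩

variable {n : ℕ} {a b c m : Fin n}

/-- The half-open cyclic interval `{a, a + 1, …, b - 1}`, which is empty if `a = b`. -/
def cIco (a b : Fin n) : Finset (Fin n) := {m | (m - a).val < (b - a).val}

theorem mem_cIco_iff_sbtw (h : m ≠ a) : m ∈ cIco a b ↔ sbtw a m b := by
  simp only [cIco, Finset.mem_filter_univ, Fin.sbtw_iff]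
  fin_omega

theorem cIco_add_cIco (h : sbtw a b c) : (cIco a b).val + (cIco b c).val = (cIco a c).val := by
  rw [Fin.sbtw_iff] at h
  have hdisj : Disjoint (cIco a b) (cIco b c) := by
    simp only [cIco, Finset.disjoint_filter]
    fin_omega
  have hunion : (cIco a b).disjUnion (cIco b c) hdisj = cIco a c := by
    ext m
    simp only [cIco, Finset.mem_filter_univ, Finset.mem_disjUnion]
    fin_omega
  exact congrArg Finset.val hunion

theorem cIco_add_cIco_swap (h : a ≠ b) :
    (cIco a b).val + (cIco b a).val = Finset.univ.val := by
  have hcompl : cIco b a = (cIco a b)ᶜ := by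
    ext m
    simp only [cIco, Finset.mem_compl, Finset.mem_filter_univ]
    fin_omega
  rw [hcompl]
  exact congrArg Finset.val ((Finset.disjUnion_eq_union _ _ disjoint_compl_right).trans
    (Finset.union_compl _))

theorem val_one_of_two_le [NeZero n] (hn : 2 ≤ n) : (1 : Fin n).val = 1 := by
  rw [Fin.val_one', Nat.mod_eq_of_lt (by omega)]

theorem ne_add_one [NeZero n] (hn : 2 ≤ n) (a : Fin n) : a ≠ a + 1 := by
  rw [Ne, left_eq_add, ← Fin.val_inj, val_one_of_two_le hn, Fin.val_zero]
  exact one_ne_zero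

theorem cIco_add_one [NeZero n] (hn : 2 ≤ n) (a : Fin n) : cIco a (a + 1) = {a} := by
  ext m
  rw [cIco, Finset.mem_filter_univ, add_sub_cancel_left, val_one_of_two_le hn,
    Finset.mem_singleton, Nat.lt_one_iff, ← Fin.val_zero n, Fin.val_inj, sub_eq_zero]

theorem forall_not_sbtw_iff [NeZero n] (hn : 2 ≤ n) (hab : a ≠ b) :
    (∀ m, ¬sbtw a m b) ↔ b = a + 1 := by
  refine ⟨fun h => ?_, ?_⟩
  · have hsucc : a + 1 ∉ cIco a b := by
      rw [mem_cIco_iff_sbtw (ne_add_one hn a).symm]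
      exact h _
    rw [cIco, Finset.mem_filter_univ, add_sub_cancel_left, val_one_of_two_le hn] at hsucc
    have hpos : (b - a).val ≠ 0 := by
      rw [Fin.val_ne_zero_iff]
      exact sub_ne_zero.2 hab.symm
    rw [← sub_eq_iff_eq_add', ← Fin.val_inj, val_one_of_two_le hn]
    omega
  · rintro rfl m hm
    have hma : m ≠ a := by rintro rfl; exact sbtw_irrefl_left hm
    rw [← mem_cIco_iff_sbtw hma, cIco_add_one hn, Finset.mem_singleton] at hm
    exact hma hm

end CyclicIntervals

section Rectangles

/-- The point of the generator `x` in column `k` lies in the interior of the rectangle `r(x; a, b)`,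
where `r = (a, b)`. -/
def InInterior {α : Type*} [CircularOrder α] (x : Perm α) (r : α × α) (k : α) : Prop :=
  sbtw r.1 k r.2 ∧ sbtw (x r.1) (x k) (x r.2)

variable {n : ℕ}

/-- The squares of the rectangle `r(x; a, b)`, where `r = (a, b)`. -/
def cells (x : Perm (Fin n)) (r : Fin n × Fin n) : Multiset (Fin n × Fin n) :=
  (cIco r.1 r.2).val ×ˢ (cIco (x r.1) (x r.2)).val

theorem mem_cells_iff_inInterior {x : Perm (Fin n)} {r : Fin n × Fin n} {k : Fin n}
    (hk : k ≠ r.1) : (k, x k) ∈ cells x r ↔ InInterior x r k := by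
  rw [cells, Multiset.mem_product, Finset.mem_val, Finset.mem_val, mem_cIco_iff_sbtw hk,
    mem_cIco_iff_sbtw (x.injective.ne hk), InInterior]

theorem rectEmpty_iff_forall_not_inInterior {x : Perm (Fin n)} {a b : Fin n} :
    RectEmpty n x a b ↔ ∀ k, ¬InInterior x (a, b) k := by
  refine ⟨fun h k hk => ?_, fun h k hka _ hk => h k ((mem_cells_iff_inInterior hka).1 ?_)⟩
  · have hka : k ≠ a := by rintro rfl; exact sbtw_irrefl_left hk.1
    have hkb : k ≠ b := by rintro rfl; exact sbtw_irrefl_right hk.1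
    exact h k hka hkb (by simpa [cells, cIco] using (mem_cells_iff_inInterior hka).2 hk)
  · simpa [cells, cIco] using hk

theorem cntMark_eq_count (σ x : Perm (Fin n)) (a b m : Fin n) :
    cntMark n σ x a b m = (cells x (a, b)).count (m, σ m) := by
  rw [cells, Multiset.count_eq_of_nodup ((cIco _ _).nodup.product (cIco _ _).nodup)]
  simp only [cntMark, cIco, Multiset.mem_product, Finset.mem_val, Finset.mem_filter_univ]

/-- The nondegenerate empty rectangles starting at the generator `x`. -/
noncomputable def emptyRects (x : Perm (Fin n)) : Finset (Fin n × Fin n) :=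
  {r | r.1 ≠ r.2 ∧ RectEmpty n x r.1 r.2}

end Rectangles

section RectanglePairs

/-- The columns in which one of the two rectangles of a juxtaposition has a corner. -/
def corners {α : Type*} (q : (α × α) × (α × α)) : Set α := {q.1.1, q.1.2, q.2.1, q.2.2}

/-- The corners of the juxtaposition `q = ((a, b), (c, d))` of the rectangle `r(x; a, b)` with the
rectangle `r(y; c, d)`, where `y = x ∘ (a b)`, do not obstruct the emptiness of the two. -/
def CornersEmpty {α : Type*} [CircularOrder α] [DecidableEq α] (x : Perm α)
    (q : (α × α) × (α × α)) : Prop :=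
  ∀ k ∈ corners q, ¬InInterior x q.1 k ∧ ¬InInterior (x * swap q.1.1 q.1.2) q.2 k

variable {n : ℕ}

/-- The juxtapositions of two nondegenerate empty rectangles, the first starting at `x`. -/
noncomputable def emptyPairs (x : Perm (Fin n)) :
    Finset ((Fin n × Fin n) × (Fin n × Fin n)) :=
  {q | q.1 ∈ emptyRects x ∧ q.2 ∈ emptyRects (x * swap q.1.1 q.1.2)}

/-- The underlying 2-chain of a juxtaposition: its squares, counted with multiplicity. -/
def domain (x : Perm (Fin n)) (q : (Fin n × Fin n) × (Fin n × Fin n)) :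
    Multiset (Fin n × Fin n) :=
  cells x q.1 + cells (x * swap q.1.1 q.1.2) q.2

/-- The weight `∏ₘ Uₘ^{Oₘ}` of a juxtaposition of two rectangles. -/
noncomputable def pairMon (σ x : Perm (Fin n)) (q : (Fin n × Fin n) × (Fin n × Fin n)) : Lam n :=
  Umon n σ x q.1.1 q.1.2 * Umon n σ (x * swap q.1.1 q.1.2) q.2.1 q.2.2

theorem pairMon_eq_prod_count_domain (σ x : Perm (Fin n))
    (q : (Fin n × Fin n) × (Fin n × Fin n)) :
    pairMon σ x q = ∏ m, MvPolynomial.X m ^ (domain x q).count (m, σ m) := by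
  simp only [pairMon, Umon, cntMark_eq_count, ← Finset.prod_mul_distrib, ← pow_add, domain,
    Multiset.count_add]

theorem mem_emptyPairs_iff_forall_not_or {x : Perm (Fin n)}
    {q : (Fin n × Fin n) × (Fin n × Fin n)} :
    q ∈ emptyPairs x ↔ (q.1.1 ≠ q.1.2 ∧ q.2.1 ≠ q.2.2) ∧
      ∀ k, ¬(InInterior x q.1 k ∨ InInterior (x * swap q.1.1 q.1.2) q.2 k) := by
  simp only [emptyPairs, emptyRects, Finset.mem_filter_univ, rectEmpty_iff_forall_not_inInterior,
    not_or, forall_and]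
  tauto

theorem mem_emptyPairs_iff {x : Perm (Fin n)} {q : (Fin n × Fin n) × (Fin n × Fin n)} :
    q ∈ emptyPairs x ↔ (q.1.1 ≠ q.1.2 ∧ q.2.1 ≠ q.2.2) ∧ CornersEmpty x q ∧
      ∀ k ∉ corners q, (k, x k) ∉ domain x q := by
  have hoff : ∀ k ∉ corners q, ((k, x k) ∉ domain x q ↔
      ¬(InInterior x q.1 k ∨ InInterior (x * swap q.1.1 q.1.2) q.2 k)) := by
    intro k hk
    simp only [corners, Set.mem_insert_iff, Set.mem_singleton_iff, not_or] at hk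
    have hxk : (x * swap q.1.1 q.1.2) k = x k := by
      rw [Perm.mul_apply, swap_apply_of_ne_of_ne hk.1 hk.2.1]
    rw [domain, Multiset.mem_add, mem_cells_iff_inInterior hk.1, ← hxk,
      mem_cells_iff_inInterior hk.2.2.1]
  rw [mem_emptyPairs_iff_forall_not_or, CornersEmpty]
  refine and_congr_right fun _ => ⟨fun h => ⟨fun k _ => not_or.1 (h k), fun k hk =>
    (hoff k hk).2 (h k)⟩, fun h k => ?_⟩
  by_cases hk : k ∈ corners q
  exacts [not_or.2 (h.1 k hk), (hoff k hk).1 (h.2 k hk)]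

end RectanglePairs

section HurwitzMove

variable {α : Type*}

/-- The Hurwitz move `((a, b), (c, d)) ↦ ((s c, s d), (a, b))` with `s = (a b)`. It leaves the
product of the two transpositions unchanged, hence also the endpoint of a juxtaposition. -/
def hurwitz [DecidableEq α] : Perm ((α × α) × (α × α)) where
  toFun q := (q.2.map (swap q.1.1 q.1.2) (swap q.1.1 q.1.2), q.1)
  invFun q := (q.2, q.1.map (swap q.2.1 q.2.2) (swap q.2.1 q.2.2))
  left_inv := fun ⟨⟨a, b⟩, c, d⟩ => by simp
  right_inv := fun ⟨⟨a, b⟩, c, d⟩ => by simp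

/-- Both rectangles of the juxtaposition have the same two corner columns. If they are empty, their
union is then an annulus of height or width one. -/
def IsAnnulus (q : (α × α) × (α × α)) : Prop := q.2 = q.1 ∨ q.2 = q.1.swap

@[elab_as_elim]
theorem nonannular_cases {motive : (α × α) × (α × α) → Prop}
    (left_left : ∀ a b c, a ≠ b → a ≠ c → b ≠ c → motive ((a, b), (a, c)))
    (right_right : ∀ a b c, a ≠ b → a ≠ c → b ≠ c → motive ((a, b), (c, b)))
    (right_left : ∀ a b c, a ≠ b → a ≠ c → b ≠ c → motive ((a, b), (b, c)))
    (left_right : ∀ a b c, a ≠ b → a ≠ c → b ≠ c → motive ((a, b), (c, a)))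
    (disjoint : ∀ a b c d, a ≠ b → c ≠ d → a ≠ c → a ≠ d → b ≠ c → b ≠ d →
      motive ((a, b), (c, d)))
    (q : (α × α) × (α × α)) (hq : q.1.1 ≠ q.1.2 ∧ q.2.1 ≠ q.2.2) (hann : ¬IsAnnulus q) :
    motive q := by
  obtain ⟨⟨a, b⟩, c, d⟩ := q
  simp only [IsAnnulus, Prod.swap_prod_mk, Prod.mk.injEq, not_or, not_and, ne_eq] at hq hann
  by_cases hca : c = a
  · subst hca
    exact left_left _ _ _ hq.1 hq.2 (Ne.symm (hann.1 rfl))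
  by_cases hdb : d = b
  · subst hdb
    exact right_right _ _ _ hq.1 (Ne.symm hca) (Ne.symm hq.2)
  by_cases hcb : c = b
  · subst hcb
    exact right_left _ _ _ hq.1 (Ne.symm (hann.2 rfl)) hq.2
  by_cases hda : d = a
  · subst hda
    exact left_right _ _ _ hq.1 (Ne.symm hca) (Ne.symm hcb)
  · exact disjoint _ _ _ _ hq.1 hq.2 (Ne.symm hca) (Ne.symm hda) (Ne.symm hcb) (Ne.symm hdb)

variable [DecidableEq α]

theorem hurwitz_apply (a b c d : α) :
    hurwitz ((a, b), (c, d)) = ((swap a b c, swap a b d), (a, b)) := rfl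

theorem hurwitz_left_left {a b c : α} (hac : a ≠ c) (hbc : b ≠ c) :
    hurwitz ((a, b), (a, c)) = ((b, c), (a, b)) := by
  rw [hurwitz_apply, swap_apply_left, swap_apply_of_ne_of_ne hac.symm hbc.symm]

theorem hurwitz_right_right {a b c : α} (hac : a ≠ c) (hbc : b ≠ c) :
    hurwitz ((a, b), (c, b)) = ((c, a), (a, b)) := by
  rw [hurwitz_apply, swap_apply_right, swap_apply_of_ne_of_ne hac.symm hbc.symm]

theorem hurwitz_right_left {a b c : α} (hac : a ≠ c) (hbc : b ≠ c) :
    hurwitz ((a, b), (b, c)) = ((a, c), (a, b)) := by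
  rw [hurwitz_apply, swap_apply_right, swap_apply_of_ne_of_ne hac.symm hbc.symm]

theorem hurwitz_left_right {a b c : α} (hac : a ≠ c) (hbc : b ≠ c) :
    hurwitz ((a, b), (c, a)) = ((c, b), (a, b)) := by
  rw [hurwitz_apply, swap_apply_left, swap_apply_of_ne_of_ne hac.symm hbc.symm]

theorem hurwitz_of_disjoint {a b c d : α} (hac : a ≠ c) (had : a ≠ d) (hbc : b ≠ c)
    (hbd : b ≠ d) : hurwitz ((a, b), (c, d)) = ((c, d), (a, b)) := by
  rw [hurwitz_apply, swap_apply_of_ne_of_ne hac.symm hbc.symm,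
    swap_apply_of_ne_of_ne had.symm hbd.symm]

theorem hurwitz_symm_left_left {a b c : α} (hab : a ≠ b) (hbc : b ≠ c) :
    hurwitz.symm ((a, b), (a, c)) = ((a, c), (c, b)) := by
  rw [symm_apply_eq, hurwitz_right_left hab hbc.symm]

theorem hurwitz_symm_right_right {a b c : α} (hab : a ≠ b) (hac : a ≠ c) :
    hurwitz.symm ((a, b), (c, b)) = ((c, b), (a, c)) := by
  rw [symm_apply_eq, hurwitz_left_right hac.symm hab.symm]

theorem hurwitz_symm_right_left {a b c : α} (hab : a ≠ b) (hac : a ≠ c) :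
    hurwitz.symm ((a, b), (b, c)) = ((b, c), (a, c)) := by
  rw [symm_apply_eq, hurwitz_right_right hab.symm hac.symm]

theorem hurwitz_symm_left_right {a b c : α} (hab : a ≠ b) (hbc : b ≠ c) :
    hurwitz.symm ((a, b), (c, a)) = ((c, a), (c, b)) := by
  rw [symm_apply_eq, hurwitz_left_left hbc.symm hab]

theorem hurwitz_symm_of_disjoint {a b c d : α} (hac : a ≠ c) (had : a ≠ d) (hbc : b ≠ c)
    (hbd : b ≠ d) : hurwitz.symm ((a, b), (c, d)) = ((c, d), (a, b)) := by
  rw [symm_apply_eq, hurwitz_of_disjoint hac.symm hbc.symm had.symm hbd.symm]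

theorem nondegenerate_hurwitz {q : (α × α) × (α × α)} :
    ((hurwitz q).1.1 ≠ (hurwitz q).1.2 ∧ (hurwitz q).2.1 ≠ (hurwitz q).2.2) ↔
      (q.1.1 ≠ q.1.2 ∧ q.2.1 ≠ q.2.2) := by
  simp [hurwitz, and_comm]

theorem isAnnulus_hurwitz {q : (α × α) × (α × α)} : IsAnnulus (hurwitz q) ↔ IsAnnulus q := by
  obtain ⟨⟨a, b⟩, c, d⟩ := q
  simp only [hurwitz_apply, IsAnnulus, Prod.swap_prod_mk, Prod.mk.injEq]
  grind

theorem corners_hurwitz (q : (α × α) × (α × α)) : corners (hurwitz q) = corners q := by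
  obtain ⟨⟨a, b⟩, c, d⟩ := q
  ext k
  simp only [hurwitz_apply, corners, Set.mem_insert_iff, Set.mem_singleton_iff, swap_apply_def]
  grind

theorem hurwitz_ne_self {q : (α × α) × (α × α)} (hq : q.1.1 ≠ q.1.2) : hurwitz q ≠ q := by
  intro h
  have heq : q.1 = q.2 := congrArg Prod.snd h
  have hfst : swap q.1.1 q.1.2 q.2.1 = q.1.1 := congrArg (fun p => p.1.1) h
  rw [← heq, swap_apply_left] at hfst
  exact hq hfst.symm

section CircularOrder

variable [CircularOrder α] {x : Perm α} {a b c d : α}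

theorem cornersEmpty_left_left_iff (hab : a ≠ b) (hac : a ≠ c) (hbc : b ≠ c) :
    CornersEmpty x ((a, b), (a, c)) ↔ sbtw (x a) (x b) (x c) := by
  have hx := sbtw_perm_iff (x.injective.ne hab) (x.injective.ne hac) (x.injective.ne hbc)
  have h := sbtw_perm_iff hab hac hbc
  by_cases hpos : sbtw (x a) (x b) (x c) <;>
    simp [CornersEmpty, corners, InInterior, sbtw_irrefl_left, sbtw_irrefl_right, hac.symm,
      hbc.symm, swap_apply_of_ne_of_ne, hx, h, hpos]

theorem cornersEmpty_right_right_iff (hab : a ≠ b) (hac : a ≠ c) (hbc : b ≠ c) :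
    CornersEmpty x ((a, b), (c, b)) ↔ sbtw (x a) (x b) (x c) := by
  have hx := sbtw_perm_iff (x.injective.ne hab) (x.injective.ne hac) (x.injective.ne hbc)
  have h := sbtw_perm_iff hab hac hbc
  by_cases hpos : sbtw (x a) (x b) (x c) <;>
    simp [CornersEmpty, corners, InInterior, sbtw_irrefl_left, sbtw_irrefl_right, hac.symm,
      hbc.symm, swap_apply_of_ne_of_ne, hx, h, hpos]

theorem cornersEmpty_right_left_iff (hab : a ≠ b) (hac : a ≠ c) (hbc : b ≠ c) :
    CornersEmpty x ((a, b), (b, c)) ↔ sbtw a b c := by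
  have hx := sbtw_perm_iff (x.injective.ne hab) (x.injective.ne hac) (x.injective.ne hbc)
  have h := sbtw_perm_iff hab hac hbc
  by_cases hpos : sbtw a b c <;>
    simp [CornersEmpty, corners, InInterior, sbtw_irrefl_left, sbtw_irrefl_right, hac.symm,
      hbc.symm, swap_apply_of_ne_of_ne, hx, h, hpos]

theorem cornersEmpty_left_right_iff (hab : a ≠ b) (hac : a ≠ c) (hbc : b ≠ c) :
    CornersEmpty x ((a, b), (c, a)) ↔ sbtw a b c := by
  have hx := sbtw_perm_iff (x.injective.ne hab) (x.injective.ne hac) (x.injective.ne hbc)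
  have h := sbtw_perm_iff hab hac hbc
  by_cases hpos : sbtw a b c <;>
    simp [CornersEmpty, corners, InInterior, sbtw_irrefl_left, sbtw_irrefl_right, hac.symm,
      hbc.symm, swap_apply_of_ne_of_ne, hx, h, hpos]

theorem CornersEmpty.swap_of_disjoint (hac : a ≠ c) (had : a ≠ d) (hbc : b ≠ c) (hbd : b ≠ d)
    (h : CornersEmpty x ((a, b), (c, d))) : CornersEmpty x ((c, d), (a, b)) := by
  have hx : ∀ {i j}, i ≠ j → x i ≠ x j := x.injective.ne
  simp only [CornersEmpty, corners, InInterior, Set.mem_insert_iff, Set.mem_singleton_iff,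
    forall_eq_or_imp, forall_eq, Perm.mul_apply, swap_apply_left, swap_apply_right,
    swap_apply_of_ne_of_ne hac.symm hbc.symm, swap_apply_of_ne_of_ne had.symm hbd.symm,
    swap_apply_of_ne_of_ne hac had, swap_apply_of_ne_of_ne hbc hbd, sbtw_irrefl_left,
    sbtw_irrefl_right, false_and, not_false_eq_true, true_and, and_true] at h ⊢
  have ha := sbtw_of_sbtw_of_not_sbtw (a := a) hbc hbd
  have hb := sbtw_of_sbtw_of_not_sbtw (a := b) hac had
  have hc := sbtw_of_sbtw_of_not_sbtw (a := c) had.symm hbd.symm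
  have hd := sbtw_of_sbtw_of_not_sbtw (a := d) hac.symm hbc.symm
  have hxa := sbtw_of_sbtw_of_not_sbtw (a := x a) (hx hbc) (hx hbd)
  have hxb := sbtw_of_sbtw_of_not_sbtw (a := x b) (hx hac) (hx had)
  have hxc := sbtw_of_sbtw_of_not_sbtw (a := x c) (hx had.symm) (hx hbd.symm)
  have hxd := sbtw_of_sbtw_of_not_sbtw (a := x d) (hx hac.symm) (hx hbc.symm)
  grind

/-- An `L`-shape or its toroidal analogue is cut from its reflex corner along the other direction,
and two rectangles without common corner column are traversed in the other order. -/
theorem CornersEmpty.hurwitz_or_hurwitz_symm {q : (α × α) × (α × α)} (h : CornersEmpty x q)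
    (hq : q.1.1 ≠ q.1.2 ∧ q.2.1 ≠ q.2.2) (hann : ¬IsAnnulus q) :
    (CornersEmpty x (hurwitz q) ∨ CornersEmpty x (hurwitz.symm q)) ∧
      (CornersEmpty x (hurwitz q) → CornersEmpty x (hurwitz.symm q) →
        hurwitz q = hurwitz.symm q) := by
  have hx : ∀ {i j}, i ≠ j → x i ≠ x j := x.injective.ne
  have of_iff_not : ∀ {P Q r : Prop}, (Q ↔ ¬P) → (P ∨ Q) ∧ (P → Q → r) := by tauto
  revert h
  refine nonannular_cases ?_ ?_ ?_ ?_ ?_ q hq hann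
  · intro a b c hab hac hbc _
    rw [hurwitz_symm_left_left hab hbc, hurwitz_left_left hac hbc,
      cornersEmpty_left_right_iff hbc hab.symm hac.symm,
      cornersEmpty_right_left_iff hac hab hbc.symm]
    have h := sbtw_perm_iff hab hac hbc
    exact of_iff_not (by simp only [h])
  · intro a b c hab hac hbc _
    rw [hurwitz_symm_right_right hab hac, hurwitz_right_right hac hbc,
      cornersEmpty_right_left_iff hac.symm hbc.symm hab,
      cornersEmpty_left_right_iff hbc.symm hac.symm hab.symm]
    have h := sbtw_perm_iff hab hac hbc
    exact of_iff_not (by simp only [h])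
  · intro a b c hab hac hbc _
    rw [hurwitz_symm_right_left hab hac, hurwitz_right_left hac hbc,
      cornersEmpty_left_left_iff hac hab hbc.symm,
      cornersEmpty_right_right_iff hbc hab.symm hac.symm]
    have h := sbtw_perm_iff (hx hab) (hx hac) (hx hbc)
    exact of_iff_not (by simp only [h, not_not])
  · intro a b c hab hac hbc _
    rw [hurwitz_symm_left_right hab hbc, hurwitz_left_right hac hbc,
      cornersEmpty_right_right_iff hbc.symm hac.symm hab.symm,
      cornersEmpty_left_left_iff hac.symm hbc.symm hab]
    have h := sbtw_perm_iff (hx hab) (hx hac) (hx hbc)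
    exact of_iff_not (by simp only [h, not_not])
  · intro a b c d _ _ hac had hbc hbd h
    rw [hurwitz_symm_of_disjoint hac had hbc hbd, hurwitz_of_disjoint hac had hbc hbd]
    exact ⟨Or.inl (h.swap_of_disjoint hac had hbc hbd), fun _ _ => rfl⟩

end CircularOrder

end HurwitzMove

section DomainInvariance

variable {n : ℕ} {x : Perm (Fin n)}

theorem domain_hurwitz_left_left {a b c : Fin n} (hab : a ≠ b) (hac : a ≠ c) (hbc : b ≠ c)
    (h : CornersEmpty x ((a, b), (a, c))) (h' : CornersEmpty x (hurwitz ((a, b), (a, c)))) :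
    domain x (hurwitz ((a, b), (a, c))) = domain x ((a, b), (a, c)) := by
  rw [hurwitz_left_left hac hbc] at h' ⊢
  have hrow := (cornersEmpty_left_left_iff hab hac hbc).1 h
  have hcol := (cornersEmpty_left_right_iff hbc hab.symm hac.symm).1 h'
  simp only [domain, cells, Perm.mul_apply, swap_apply_left,
    swap_apply_of_ne_of_ne hac.symm hbc.symm, swap_apply_of_ne_of_ne hab hac]
  rw [← cIco_add_cIco hrow, ← cIco_add_cIco hcol.cyclic_right, Multiset.product_add,
    Multiset.add_product]
  abel

theorem domain_hurwitz_right_right {a b c : Fin n} (hab : a ≠ b) (hac : a ≠ c) (hbc : b ≠ c)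
    (h : CornersEmpty x ((a, b), (c, b))) (h' : CornersEmpty x (hurwitz ((a, b), (c, b)))) :
    domain x (hurwitz ((a, b), (c, b))) = domain x ((a, b), (c, b)) := by
  rw [hurwitz_right_right hac hbc] at h' ⊢
  have hrow := (cornersEmpty_right_right_iff hab hac hbc).1 h
  have hcol := (cornersEmpty_right_left_iff hac.symm hbc.symm hab).1 h'
  simp only [domain, cells, Perm.mul_apply, swap_apply_right,
    swap_apply_of_ne_of_ne hac.symm hbc.symm, swap_apply_of_ne_of_ne hbc hab.symm]
  rw [← cIco_add_cIco hrow.cyclic_right, ← cIco_add_cIco hcol, Multiset.product_add,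
    Multiset.add_product]
  abel

theorem domain_hurwitz_right_left {a b c : Fin n} (hab : a ≠ b) (hac : a ≠ c) (hbc : b ≠ c)
    (h : CornersEmpty x ((a, b), (b, c))) (h' : CornersEmpty x (hurwitz ((a, b), (b, c)))) :
    domain x (hurwitz ((a, b), (b, c))) = domain x ((a, b), (b, c)) := by
  rw [hurwitz_right_left hac hbc] at h' ⊢
  have hcol := (cornersEmpty_right_left_iff hab hac hbc).1 h
  have hrow := (cornersEmpty_left_left_iff hac hab hbc.symm).1 h'
  simp only [domain, cells, Perm.mul_apply, swap_apply_left, swap_apply_right,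
    swap_apply_of_ne_of_ne hac.symm hbc.symm, swap_apply_of_ne_of_ne hab.symm hbc]
  rw [← cIco_add_cIco hrow, ← cIco_add_cIco hcol, Multiset.product_add,
    Multiset.add_product]
  abel

theorem domain_hurwitz_left_right {a b c : Fin n} (hab : a ≠ b) (hac : a ≠ c) (hbc : b ≠ c)
    (h : CornersEmpty x ((a, b), (c, a))) (h' : CornersEmpty x (hurwitz ((a, b), (c, a)))) :
    domain x (hurwitz ((a, b), (c, a))) = domain x ((a, b), (c, a)) := by
  rw [hurwitz_left_right hac hbc] at h' ⊢
  have hcol := (cornersEmpty_left_right_iff hab hac hbc).1 h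
  have hrow := (cornersEmpty_right_right_iff hbc.symm hac.symm hab.symm).1 h'
  simp only [domain, cells, Perm.mul_apply, swap_apply_left, swap_apply_right,
    swap_apply_of_ne_of_ne hac.symm hbc.symm, swap_apply_of_ne_of_ne hac hab]
  rw [← cIco_add_cIco hrow.cyclic_right, ← cIco_add_cIco hcol.cyclic_right, Multiset.product_add,
    Multiset.add_product]
  abel

theorem domain_hurwitz_of_disjoint {a b c d : Fin n} (hac : a ≠ c) (had : a ≠ d) (hbc : b ≠ c)
    (hbd : b ≠ d) : domain x (hurwitz ((a, b), (c, d))) = domain x ((a, b), (c, d)) := by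
  rw [hurwitz_of_disjoint hac had hbc hbd]
  simp only [domain, cells, Perm.mul_apply, swap_apply_of_ne_of_ne hac had,
    swap_apply_of_ne_of_ne hbc hbd, swap_apply_of_ne_of_ne hac.symm hbc.symm,
    swap_apply_of_ne_of_ne had.symm hbd.symm]
  exact add_comm _ _

variable {q : (Fin n × Fin n) × (Fin n × Fin n)}

theorem domain_hurwitz (hq : q.1.1 ≠ q.1.2 ∧ q.2.1 ≠ q.2.2) (hann : ¬IsAnnulus q) :
    CornersEmpty x q → CornersEmpty x (hurwitz q) → domain x (hurwitz q) = domain x q :=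
  nonannular_cases (fun _ _ _ => domain_hurwitz_left_left)
    (fun _ _ _ => domain_hurwitz_right_right) (fun _ _ _ => domain_hurwitz_right_left)
    (fun _ _ _ => domain_hurwitz_left_right)
    (fun _ _ _ _ _ _ hac had hbc hbd _ _ => domain_hurwitz_of_disjoint hac had hbc hbd) q hq hann

theorem hurwitz_mem_emptyPairs_iff (hann : ¬IsAnnulus q) (h : CornersEmpty x q)
    (h' : CornersEmpty x (hurwitz q)) : hurwitz q ∈ emptyPairs x ↔ q ∈ emptyPairs x := by
  rw [mem_emptyPairs_iff, mem_emptyPairs_iff, nondegenerate_hurwitz, corners_hurwitz]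
  refine and_congr_right fun hq => ?_
  rw [domain_hurwitz hq hann h h', iff_true_intro h, iff_true_intro h']

theorem pairMon_hurwitz (σ : Perm (Fin n)) (hann : ¬IsAnnulus q) (hq : q ∈ emptyPairs x)
    (hq' : hurwitz q ∈ emptyPairs x) : pairMon σ x (hurwitz q) = pairMon σ x q := by
  rw [mem_emptyPairs_iff] at hq hq'
  rw [pairMon_eq_prod_count_domain, pairMon_eq_prod_count_domain,
    domain_hurwitz hq.1 hann hq.2.1 hq'.2.1]

theorem hurwitz_mem_or_hurwitz_symm_mem (hann : ¬IsAnnulus q) (hq : q ∈ emptyPairs x) :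
    (hurwitz q ∈ emptyPairs x ∨ hurwitz.symm q ∈ emptyPairs x) ∧
      (hurwitz q ∈ emptyPairs x → hurwitz.symm q ∈ emptyPairs x → hurwitz q = hurwitz.symm q) := by
  obtain ⟨hnd, hce, -⟩ := mem_emptyPairs_iff.1 hq
  have hsymm : hurwitz (hurwitz.symm q) = q := hurwitz.apply_symm_apply q
  have hann' : ¬IsAnnulus (hurwitz.symm q) := by rwa [← isAnnulus_hurwitz, hsymm]
  obtain ⟨hex, huniq⟩ := hce.hurwitz_or_hurwitz_symm hnd hann
  refine ⟨hex.imp (fun h => (hurwitz_mem_emptyPairs_iff hann hce h).2 hq) fun h => ?_,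
    fun h h' => huniq (mem_emptyPairs_iff.1 h).2.1 (mem_emptyPairs_iff.1 h').2.1⟩
  rwa [← hurwitz_mem_emptyPairs_iff hann' h (by rwa [hsymm]), hsymm]

/-- The other resolution of a nonannular juxtaposition of empty rectangles with the same domain. -/
noncomputable def partner (x : Perm (Fin n)) (q : (Fin n × Fin n) × (Fin n × Fin n)) :
    (Fin n × Fin n) × (Fin n × Fin n) :=
  if hurwitz q ∈ emptyPairs x then hurwitz q else hurwitz.symm q

theorem isAnnulus_partner : IsAnnulus (partner x q) ↔ IsAnnulus q := by
  unfold partner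
  split_ifs
  exacts [isAnnulus_hurwitz, by rw [← isAnnulus_hurwitz, hurwitz.apply_symm_apply]]

theorem partner_mem_emptyPairs (hann : ¬IsAnnulus q) (hq : q ∈ emptyPairs x) :
    partner x q ∈ emptyPairs x := by
  unfold partner
  split_ifs with h
  exacts [h, (hurwitz_mem_or_hurwitz_symm_mem hann hq).1.resolve_left h]

theorem partner_partner (hann : ¬IsAnnulus q) (hq : q ∈ emptyPairs x) :
    partner x (partner x q) = q := by
  by_cases h : hurwitz q ∈ emptyPairs x
  · rw [partner, partner, if_pos h, hurwitz.symm_apply_apply]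
    refine ite_eq_right_iff.2 fun h' => ?_
    have huniq := (hurwitz_mem_or_hurwitz_symm_mem (isAnnulus_hurwitz.not.2 hann) h).2
    rw [hurwitz.symm_apply_apply] at huniq
    exact huniq h' hq
  · rw [partner, partner, if_neg h, hurwitz.apply_symm_apply, if_pos hq]

theorem partner_ne_self (hq : q.1.1 ≠ q.1.2) : partner x q ≠ q := by
  unfold partner
  split_ifs
  · exact hurwitz_ne_self hq
  · rw [ne_eq, symm_apply_eq]
    exact (hurwitz_ne_self hq).symm

theorem pairMon_smul_partner {M : Type*} [AddCommGroup M] [Module (Lam n) M] (σ : Perm (Fin n))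
    {v : (Fin n × Fin n) × (Fin n × Fin n) → M}
    (hv : ∀ q, q.1.1 ≠ q.1.2 → q.2.1 ≠ q.2.2 → v (hurwitz q) = -v q)
    (hann : ¬IsAnnulus q) (hq : q ∈ emptyPairs x) :
    pairMon σ x (partner x q) • v (partner x q) = -(pairMon σ x q • v q) := by
  have hmove : ∀ {p}, ¬IsAnnulus p → p ∈ emptyPairs x → hurwitz p ∈ emptyPairs x →
      pairMon σ x (hurwitz p) • v (hurwitz p) = -(pairMon σ x p • v p) := by
    intro p hann hp hp'
    obtain ⟨⟨hfst, hsnd⟩, -⟩ := mem_emptyPairs_iff.1 hp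
    rw [pairMon_hurwitz σ hann hp hp', hv p hfst hsnd, smul_neg]
  have hmem := partner_mem_emptyPairs hann hq
  have hann' := isAnnulus_partner (x := x).not.2 hann
  rw [partner] at hmem hann' ⊢
  split_ifs at hmem hann' ⊢ with h
  · exact hmove hann hq h
  · rw [← neg_eq_iff_eq_neg, ← hmove hann' hmem (by rwa [hurwitz.apply_symm_apply]),
      hurwitz.apply_symm_apply]

theorem sum_nonannular_emptyPairs {M : Type*} [AddCommGroup M] [Module (Lam n) M]
    (σ x : Perm (Fin n)) {v : (Fin n × Fin n) × (Fin n × Fin n) → M}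
    (hv : ∀ q, q.1.1 ≠ q.1.2 → q.2.1 ≠ q.2.2 → v (hurwitz q) = -v q) :
    ∑ q ∈ emptyPairs x with ¬IsAnnulus q, pairMon σ x q • v q = 0 := by
  refine Finset.sum_involution (fun q _ => partner x q) ?_ ?_ ?_ ?_ <;>
    simp only [Finset.mem_filter, and_imp]
  · intro q hq hann
    rw [pairMon_smul_partner σ hv hann hq, add_neg_cancel]
  · exact fun q hq _ _ => partner_ne_self (mem_emptyPairs_iff.1 hq).1.1
  · exact fun q hq hann => ⟨partner_mem_emptyPairs hann hq, isAnnulus_partner.not.2 hann⟩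
  · exact fun q hq hann => partner_partner hann hq

end DomainInvariance

section Annuli

theorem inInterior_vertical_iff {α : Type*} [CircularOrder α] [DecidableEq α] {x : Perm α}
    {a b : α} (hab : a ≠ b) (k : α) :
    InInterior x (a, b) k ∨ InInterior (x * swap a b) (a, b) k ↔ sbtw a k b := by
  by_cases hka : k = a
  · simp [InInterior, hka, sbtw_irrefl_left]
  by_cases hkb : k = b
  · simp [InInterior, hkb, sbtw_irrefl_right]
  have hx : ∀ {i j}, i ≠ j → x i ≠ x j := x.injective.ne
  have h := sbtw_perm_iff (hx hab) (hx (Ne.symm hka)) (hx (Ne.symm hkb))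
  simp [InInterior, swap_apply_of_ne_of_ne hka hkb, h, ← and_or_left, em']

theorem inInterior_horizontal_iff {α : Type*} [CircularOrder α] [DecidableEq α] {x : Perm α}
    {a b : α} (hab : a ≠ b) (k : α) :
    InInterior x (a, b) k ∨ InInterior (x * swap a b) (b, a) k ↔ sbtw (x a) (x k) (x b) := by
  by_cases hka : k = a
  · simp [InInterior, hka, sbtw_irrefl_left, sbtw_irrefl_right]
  by_cases hkb : k = b
  · simp [InInterior, hkb, sbtw_irrefl_left, sbtw_irrefl_right]
  have h := sbtw_perm_iff hab (Ne.symm hka) (Ne.symm hkb)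
  simp [InInterior, swap_apply_of_ne_of_ne hka hkb, h, ← or_and_right, em']

variable {n : ℕ}

theorem pairMon_eq_X {σ x : Perm (Fin n)} {q : (Fin n × Fin n) × (Fin n × Fin n)}
    {s : Finset (Fin n × Fin n)} {c : Fin n} (hdom : domain x q = s.val)
    (hs : ∀ m, (m, σ m) ∈ s ↔ m = c) : pairMon σ x q = MvPolynomial.X c := by
  simp only [pairMon_eq_prod_count_domain, hdom, Multiset.count_eq_of_nodup s.nodup,
    Finset.mem_val, hs, pow_ite, pow_one, pow_zero, Finset.prod_ite_eq', Finset.mem_univ, if_true]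

variable [NeZero n] {x : Perm (Fin n)} {a b : Fin n}

theorem vertical_mem_emptyPairs_iff (hn : 2 ≤ n) :
    ((a, b), (a, b)) ∈ emptyPairs x ↔ b = a + 1 := by
  rw [mem_emptyPairs_iff_forall_not_or]
  refine ⟨fun ⟨⟨hab, _⟩, h⟩ => ?_, fun h => ?_⟩
  · simp only [inInterior_vertical_iff hab] at h
    exact (forall_not_sbtw_iff hn hab).1 h
  · have hab : a ≠ b := h ▸ ne_add_one hn a
    simp only [inInterior_vertical_iff hab]
    exact ⟨⟨hab, hab⟩, (forall_not_sbtw_iff hn hab).2 h⟩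

theorem horizontal_mem_emptyPairs_iff (hn : 2 ≤ n) :
    ((a, b), (b, a)) ∈ emptyPairs x ↔ x b = x a + 1 := by
  have hiff (hab : a ≠ b) : (∀ k, ¬sbtw (x a) (x k) (x b)) ↔ x b = x a + 1 :=
    x.surjective.forall.symm.trans (forall_not_sbtw_iff hn (x.injective.ne hab))
  rw [mem_emptyPairs_iff_forall_not_or]
  refine ⟨fun ⟨⟨hab, _⟩, h⟩ => ?_, fun h => ?_⟩
  · simp only [inInterior_horizontal_iff hab] at h
    exact (hiff hab).1 h
  · have hab : a ≠ b := by rintro rfl; exact ne_add_one hn _ h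
    simp only [inInterior_horizontal_iff hab]
    exact ⟨⟨hab, hab.symm⟩, (hiff hab).2 h⟩

theorem domain_vertical (hn : 2 ≤ n) :
    domain x ((a, a + 1), (a, a + 1)) = ({a} ×ˢ Finset.univ : Finset (Fin n × Fin n)).val := by
  have hrows := cIco_add_cIco_swap (x.injective.ne (ne_add_one hn a))
  simp only [domain, cells, Perm.mul_apply, swap_apply_left, swap_apply_right]
  rw [cIco_add_one hn, ← Multiset.product_add, hrows, Finset.product_val]

theorem domain_horizontal (hn : 2 ≤ n) (h : x b = x a + 1) :
    domain x ((a, b), (b, a)) = (Finset.univ ×ˢ {x a} : Finset (Fin n × Fin n)).val := by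
  have hab : a ≠ b := by rintro rfl; exact ne_add_one hn _ h
  simp only [domain, cells, Perm.mul_apply, swap_apply_left, swap_apply_right]
  rw [h, cIco_add_one hn, ← Multiset.add_product, cIco_add_cIco_swap hab, Finset.product_val]

theorem pairMon_vertical (hn : 2 ≤ n) (σ : Perm (Fin n)) :
    pairMon σ x ((a, a + 1), (a, a + 1)) = MvPolynomial.X a :=
  pairMon_eq_X (domain_vertical hn) (by simp [eq_comm])

theorem pairMon_horizontal (hn : 2 ≤ n) (σ : Perm (Fin n)) (h : x b = x a + 1) :
    pairMon σ x ((a, b), (b, a)) = MvPolynomial.X (σ.symm (x a)) :=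
  pairMon_eq_X (domain_horizontal hn h) (by simp [eq_symm_apply, eq_comm])

theorem sum_vertical {M : Type*} [AddCommGroup M] [Module (Lam n) M] (hn : 2 ≤ n)
    (σ x : Perm (Fin n)) {v : (Fin n × Fin n) × (Fin n × Fin n) → M} {w : M}
    (hv : ∀ a b, a ≠ b → v ((a, b), (a, b)) = w) :
    ∑ q ∈ emptyPairs x with q.2 = q.1, pairMon σ x q • v q =
      ∑ m, (MvPolynomial.X m : Lam n) • w := by
  symm
  refine Finset.sum_bij' (fun a _ => ((a, a + 1), (a, a + 1))) (fun q _ => q.1.1) ?_ ?_ ?_ ?_ ?_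
  · simp [vertical_mem_emptyPairs_iff hn]
  · simp
  · simp
  · rintro ⟨⟨a, b⟩, c, d⟩
    simp only [Finset.mem_filter, Prod.mk.injEq, and_imp]
    rintro hq rfl rfl
    simp [(vertical_mem_emptyPairs_iff hn).1 hq]
  · intro a _
    rw [pairMon_vertical hn, hv _ _ (ne_add_one hn a)]

theorem sum_horizontal {M : Type*} [AddCommGroup M] [Module (Lam n) M] (hn : 2 ≤ n)
    (σ x : Perm (Fin n)) {v : (Fin n × Fin n) × (Fin n × Fin n) → M} {w : M}
    (hv : ∀ a b, a ≠ b → v ((a, b), (b, a)) = w) :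
    ∑ q ∈ emptyPairs x with q.2 = q.1.swap, pairMon σ x q • v q =
      ∑ m, (MvPolynomial.X m : Lam n) • w := by
  symm
  have hmem (m : Fin n) : x (x.symm (σ m + 1)) = x (x.symm (σ m)) + 1 := by simp
  refine Finset.sum_bij'
    (fun m _ => ((x.symm (σ m), x.symm (σ m + 1)), (x.symm (σ m + 1), x.symm (σ m))))
    (fun q _ => σ.symm (x q.1.1)) ?_ ?_ ?_ ?_ ?_
  · simp [horizontal_mem_emptyPairs_iff hn]
  · simp
  · simp
  · rintro ⟨⟨a, b⟩, c, d⟩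
    simp only [Finset.mem_filter, Prod.swap_prod_mk, Prod.mk.injEq, and_imp]
    rintro hq rfl rfl
    simp [← (horizontal_mem_emptyPairs_iff hn).1 hq]
  · intro m _
    rw [pairMon_horizontal hn σ (hmem m), hv]
    · simp
    · simp [ne_add_one hn]

theorem sum_annular_emptyPairs {M : Type*} [AddCommGroup M] [Module (Lam n) M] (hn : 2 ≤ n)
    (σ x : Perm (Fin n)) {v : (Fin n × Fin n) × (Fin n × Fin n) → M} {w : M}
    (hv : ∀ a b, a ≠ b → v ((a, b), (a, b)) = w)
    (hv' : ∀ a b, a ≠ b → v ((a, b), (b, a)) = -w) :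
    ∑ q ∈ emptyPairs x with IsAnnulus q, pairMon σ x q • v q = 0 := by
  have hunion : {q ∈ emptyPairs x | IsAnnulus q} =
      {q ∈ emptyPairs x | q.2 = q.1} ∪ {q ∈ emptyPairs x | q.2 = q.1.swap} := by
    ext q
    rw [Finset.mem_filter, Finset.mem_union, Finset.mem_filter, Finset.mem_filter, ← and_or_left,
      IsAnnulus]
  have hdisj : Disjoint {q ∈ emptyPairs x | q.2 = q.1} {q ∈ emptyPairs x | q.2 = q.1.swap} := by
    refine Finset.disjoint_filter.2 fun q hq h h' => (mem_emptyPairs_iff.1 hq).1.1 ?_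
    exact congrArg Prod.fst (h.symm.trans h')
  rw [hunion, Finset.sum_union hdisj, sum_vertical hn σ x hv, sum_horizontal hn σ x hv',
    ← Finset.sum_add_distrib]
  simp only [smul_neg, add_neg_cancel, Finset.sum_const_zero]

theorem sum_emptyPairs {M : Type*} [AddCommGroup M] [Module (Lam n) M] (hn : 2 ≤ n)
    (σ x : Perm (Fin n)) {v : (Fin n × Fin n) × (Fin n × Fin n) → M} {w : M}
    (hv : ∀ q, q.1.1 ≠ q.1.2 → q.2.1 ≠ q.2.2 → v (hurwitz q) = -v q)
    (hw : ∀ a b, a ≠ b → v ((a, b), (a, b)) = w) :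
    ∑ q ∈ emptyPairs x, pairMon σ x q • v q = 0 := by
  have hw' : ∀ a b, a ≠ b → v ((a, b), (b, a)) = -w := by
    intro a b hab
    have h := hv ((b, a), (b, a)) hab.symm hab.symm
    rwa [hurwitz_apply, swap_apply_left, swap_apply_right, hw b a hab.symm] at h
  rw [← Finset.sum_filter_add_sum_filter_not _ IsAnnulus, sum_annular_emptyPairs hn σ x hw hw',
    sum_nonannular_emptyPairs σ x hv, add_zero]

end Annuli

section SpinGroup

variable {n : ℕ}

theorem zt_mul_zt : zt n * zt n = 1 :=
  PresentedGroup.one_of_mem (rels := spinRels n) (Or.inl (Or.inl (Or.inl (Or.inl rfl))))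

theorem commute_zt (g : SpinSym n) : Commute (zt n) g := by
  have hg : g ∈ Subgroup.closure (Set.range PresentedGroup.of) := by simp
  induction hg using Subgroup.closure_induction with
  | mem g hg =>
    obtain ⟨i | _, rfl⟩ := hg
    · exact PresentedGroup.mk_eq_mk_of_mul_inv_mem (rels := spinRels n)
        (Or.inl (Or.inl (Or.inl (Or.inr ⟨i, rfl⟩))))
    · exact Commute.refl _
  | one => exact Commute.one_right _
  | mul _ _ _ _ hg hh => exact hg.mul_right hh
  | inv _ _ hg => exact hg.inv_right

theorem ttN_mul_self {i : ℕ} (hi : i + 1 < n) : ttN n i * ttN n i = zt n := by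
  rw [ttN, dif_pos (by omega)]
  exact PresentedGroup.mk_eq_mk_of_mul_inv_mem (rels := spinRels n)
    (Or.inl (Or.inl (Or.inr ⟨_, rfl⟩)))

theorem ttN_mul_ttN_of_far {i j : ℕ} (hi : i + 1 < n) (hj : j + 1 < n)
    (h : i + 1 < j ∨ j + 1 < i) : ttN n i * ttN n j = zt n * ttN n j * ttN n i := by
  rw [ttN, ttN, dif_pos (by omega), dif_pos (by omega)]
  exact PresentedGroup.mk_eq_mk_of_mul_inv_mem (rels := spinRels n)
    (Or.inl (Or.inr ⟨_, _, by grind, rfl⟩))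

theorem ttN_braid {i : ℕ} (hi : i + 2 < n) :
    ttN n i * ttN n (i + 1) * ttN n i = ttN n (i + 1) * ttN n i * ttN n (i + 1) := by
  rw [ttN, ttN, dif_pos (by omega), dif_pos (by omega)]
  exact PresentedGroup.mk_eq_mk_of_mul_inv_mem (rels := spinRels n) (Or.inr ⟨_, _, rfl, rfl⟩)

theorem conj_zt : MulAut.conj (zt n) = 1 := by
  ext g
  rw [MulAut.conj_apply, (commute_zt g).eq, mul_inv_cancel_right, MulAut.one_apply]

theorem conj_apply_zt_mul (g h : SpinSym n) :
    MulAut.conj g (zt n * h) = zt n * MulAut.conj g h := by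
  rw [map_mul, MulAut.conj_apply, ← (commute_zt g).eq, mul_inv_cancel_right]

theorem conj_ttN_conj_ttN {i : ℕ} (hi : i + 1 < n) (g : SpinSym n) :
    MulAut.conj (ttN n i) (MulAut.conj (ttN n i) g) = g := by
  rw [← MulAut.mul_apply, ← map_mul, ttN_mul_self hi, conj_zt, MulAut.one_apply]

theorem conj_ttN_comm_of_far {i j : ℕ} (hi : i + 1 < n) (hj : j + 1 < n)
    (h : i + 1 < j ∨ j + 1 < i) (g : SpinSym n) :
    MulAut.conj (ttN n i) (MulAut.conj (ttN n j) g) =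
      MulAut.conj (ttN n j) (MulAut.conj (ttN n i) g) := by
  simp only [← MulAut.mul_apply, ← map_mul]
  rw [ttN_mul_ttN_of_far hi hj h, map_mul, map_mul, conj_zt, one_mul, map_mul]

theorem conj_ttN_braid {i : ℕ} (hi : i + 2 < n) (g : SpinSym n) :
    MulAut.conj (ttN n i) (MulAut.conj (ttN n (i + 1)) (MulAut.conj (ttN n i) g)) =
      MulAut.conj (ttN n (i + 1)) (MulAut.conj (ttN n i) (MulAut.conj (ttN n (i + 1)) g)) := by
  simp only [← MulAut.mul_apply, ← map_mul]
  rw [← mul_assoc, ttN_braid hi, mul_assoc]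

theorem ttil_comm {a b : ℕ} (hab : a ≠ b) : ttil n b a = zt n * ttil n a b := by
  rcases hab.lt_or_gt with h | h
  · rw [ttil, if_pos h, ttil, if_neg h.not_gt]
  · rw [ttil, if_neg h.not_gt, ttil, if_pos h, ← mul_assoc, zt_mul_zt, one_mul]

theorem conj_ttil_comm {g : SpinSym n} {a b c d : ℕ} (hab : a ≠ b) (hcd : c ≠ d)
    (h : MulAut.conj g (ttil n a b) = ttil n c d) : MulAut.conj g (ttil n b a) = ttil n d c := by
  rw [ttil_comm hab, ttil_comm hcd, conj_apply_zt_mul, h]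

theorem ttil_self_succ (i : ℕ) : ttil n i (i + 1) = ttN n i := by
  simp [ttil, ttilCore]

theorem ttil_eq_mul_mul {i j : ℕ} (h : i + 1 < j) :
    ttil n i j = ttN n i * ttil n (i + 1) j * ttN n i := by
  obtain ⟨k, rfl⟩ := Nat.exists_eq_add_of_lt h
  rw [ttil, ttil, if_neg (by omega), if_neg (by omega), ttilCore, ttilCore,
    show i + 1 + k + 1 - i = k + 1 + 1 by omega, show i + 1 + k + 1 - 1 - i = k + 1 by omega,
    show i + 1 + k + 1 - (i + 1) = k + 1 by omega, show i + 1 + k + 1 - 1 - (i + 1) = k by omega,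
    List.range'_succ (n := k + 1), List.range'_succ (n := k) (s := i)]
  simp [mul_assoc]

/-- Here and below the sign `z` is encoded in the exchanged order of the indices on the right. -/
theorem conj_ttN_ttil_succ_left {i j : ℕ} (hi : i + 1 < n) (h : i + 1 < j) :
    MulAut.conj (ttN n i) (ttil n (i + 1) j) = ttil n j i := by
  have hinv : (ttN n i)⁻¹ = zt n * ttN n i := by
    rw [inv_eq_iff_mul_eq_one, ← mul_assoc, ← (commute_zt _).eq, mul_assoc, ttN_mul_self hi,
      zt_mul_zt]
  rw [ttil_comm (a := i) (by omega), ttil_eq_mul_mul h, MulAut.conj_apply, hinv, ← mul_assoc,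
    ← (commute_zt _).eq, mul_assoc]

theorem conj_ttN_ttil_succ_right {i j : ℕ} (hi : i + 1 < n) (h : i + 1 < j) :
    MulAut.conj (ttN n i) (ttil n j (i + 1)) = ttil n i j :=
  conj_ttil_comm h.ne (by omega) (conj_ttN_ttil_succ_left hi h)

theorem conj_ttN_ttil_left {i j : ℕ} (hi : i + 1 < n) (h : i + 1 < j) :
    MulAut.conj (ttN n i) (ttil n i j) = ttil n j (i + 1) := by
  rw [← conj_ttN_ttil_succ_right hi h, conj_ttN_conj_ttN hi]

theorem conj_ttN_ttN_of_far {i j : ℕ} (hi : i + 1 < n) (hj : j + 1 < n)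
    (h : i + 1 < j ∨ j + 1 < i) : MulAut.conj (ttN n i) (ttN n j) = zt n * ttN n j := by
  rw [MulAut.conj_apply, ttN_mul_ttN_of_far hi hj h, mul_inv_cancel_right]

theorem conj_ttN_succ_ttN {i : ℕ} (hi : i + 2 < n) :
    MulAut.conj (ttN n (i + 1)) (ttN n i) = MulAut.conj (ttN n i) (ttN n (i + 1)) := by
  have h : MulAut.conj (ttN n i) (MulAut.conj (ttN n (i + 1)) (ttN n i)) = ttN n (i + 1) := by
    rw [← MulAut.mul_apply, ← map_mul, MulAut.conj_apply, mul_inv_eq_iff_eq_mul, ttN_braid hi,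
      mul_assoc]
  nth_rw 2 [← h]
  rw [conj_ttN_conj_ttN (by omega)]

theorem conj_ttN_ttil_of_lt_left {i a b : ℕ} (hia : i + 1 < a) (hab : a < b) (hb : b < n) :
    MulAut.conj (ttN n i) (ttil n a b) = ttil n b a := by
  obtain ⟨b, rfl⟩ := Nat.exists_eq_add_one.2 (Nat.zero_lt_of_lt hab)
  induction Nat.le_of_lt_succ hab using Nat.decreasingInduction with
  | self =>
    rw [ttil_comm hab.ne, ttil_self_succ]
    exact conj_ttN_ttN_of_far (by omega) hb (Or.inl hia)
  | of_succ a h ih =>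
    have hab' : a + 1 < b + 1 := by omega
    rw [← conj_ttN_ttil_succ_right (by omega) hab',
      conj_ttN_comm_of_far (by omega) (by omega) (Or.inl hia),
      conj_ttil_comm hab'.ne hab'.ne' (ih (by omega) hab'),
      conj_ttN_ttil_succ_left (by omega) hab']

theorem conj_ttN_succ_ttil {a b : ℕ} (hab : a + 1 < b) (hb : b < n) :
    MulAut.conj (ttN n (a + 1)) (ttil n a b) = ttil n (swap (a + 1) (a + 2) b) a := by
  obtain rfl | hab2 : b = a + 2 ∨ a + 2 < b := by omega
  · rw [swap_apply_right, ← conj_ttN_ttil_succ_right (by omega) hab, ttil_comm (a := a) (by omega),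
      ttil_comm (a := a + 1) (by omega), ttil_self_succ, ttil_self_succ, conj_apply_zt_mul,
      conj_apply_zt_mul, ← conj_ttN_succ_ttN hb, conj_ttN_conj_ttN hb]
  · rw [swap_apply_of_ne_of_ne (by omega) (by omega),
      ← conj_ttN_ttil_succ_right (by omega) hab, ← conj_ttN_ttil_succ_left (by omega) hab2,
      ← conj_ttN_braid (by omega), conj_ttN_ttil_of_lt_left (by omega) hab2 hb,
      conj_ttN_ttil_succ_right (by omega) hab2, conj_ttN_ttil_succ_left (by omega) hab]

theorem conj_ttN_ttil_of_left_lt {i a b : ℕ} (hai : a < i) (hi : i + 1 < n) (hab : a < b)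
    (hb : b < n) : MulAut.conj (ttN n i) (ttil n a b) = ttil n (swap i (i + 1) b) a := by
  obtain ⟨b, rfl⟩ := Nat.exists_eq_add_one.2 (Nat.zero_lt_of_lt hab)
  induction Nat.le_of_lt_succ hab using Nat.decreasingInduction with
  | self =>
    obtain rfl | hai' : i = b + 1 ∨ b + 1 < i := by omega
    · rw [swap_apply_left, ttil_self_succ, conj_ttN_succ_ttN hi,
        ← ttil_self_succ (b + 1), conj_ttN_ttil_succ_left (by omega) (by omega)]
    · rw [swap_apply_of_ne_of_ne (by omega) (by omega), ttil_comm hab.ne, ttil_self_succ]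
      exact conj_ttN_ttN_of_far hi hb (Or.inr hai')
  | of_succ a h ih =>
    have hab' : a + 1 < b + 1 := by omega
    obtain rfl | hai' : i = a + 1 ∨ a + 1 < i := by omega
    · exact conj_ttN_succ_ttil hab' hb
    · have hlt : a + 1 < swap i (i + 1) (b + 1) := by
        rw [swap_apply_def]
        split_ifs <;> omega
      rw [← conj_ttN_ttil_succ_right (by omega) hab',
        conj_ttN_comm_of_far (by omega) (by omega) (Or.inr hai'),
        conj_ttil_comm hab'.ne hlt.ne' (ih hai' hab'),
        conj_ttN_ttil_succ_left (by omega) hlt]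

theorem conj_ttN_ttil {i a b : ℕ} (hi : i + 1 < n) (ha : a < n) (hb : b < n) (hab : a ≠ b) :
    MulAut.conj (ttN n i) (ttil n a b) = ttil n (swap i (i + 1) b) (swap i (i + 1) a) := by
  wlog hlt : a < b generalizing a b
  · exact conj_ttil_comm hab.symm ((swap i (i + 1)).injective.ne hab)
      (this hb ha hab.symm (by omega))
  obtain h | rfl | rfl | h : i + 1 < a ∨ a = i + 1 ∨ a = i ∨ a < i := by omega
  · rw [conj_ttN_ttil_of_lt_left h hlt hb, swap_apply_of_ne_of_ne (by omega) (by omega),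
      swap_apply_of_ne_of_ne (by omega) (by omega)]
  · rw [conj_ttN_ttil_succ_left hi hlt, swap_apply_right,
      swap_apply_of_ne_of_ne (by omega) (by omega)]
  · obtain rfl | hb' : b = a + 1 ∨ a + 1 < b := by omega
    · rw [swap_apply_left, swap_apply_right, ttil_self_succ, MulAut.conj_apply,
        mul_inv_cancel_right]
    · rw [conj_ttN_ttil_left hi hb', swap_apply_left, swap_apply_of_ne_of_ne (by omega) (by omega)]
  · rw [conj_ttN_ttil_of_left_lt h hi hlt hb, swap_apply_of_ne_of_ne (x := a) (by omega) (by omega)]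

theorem swap_mul_swap_mul_swap_left {α : Type*} [DecidableEq α] {i m j : α} (hij : i ≠ j)
    (hmj : m ≠ j) : swap i m * swap m j * swap i m = swap i j := by
  rw [swap_comm i m, swap_comm m j, swap_mul_swap_mul_swap hmj.symm hij.symm]

theorem conj_ttil_ttil {i j a b : ℕ} (hi : i < n) (hj : j < n) (hij : i ≠ j) (ha : a < n)
    (hb : b < n) (hab : a ≠ b) :
    MulAut.conj (ttil n i j) (ttil n a b) = ttil n (swap i j b) (swap i j a) := by
  wlog hlt : i < j generalizing i j
  · rw [ttil_comm hij.symm, map_mul, conj_zt, one_mul, swap_comm]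
    exact this hj hi hij.symm (by omega)
  obtain ⟨j, rfl⟩ := Nat.exists_eq_add_one.2 (Nat.zero_lt_of_lt hlt)
  induction Nat.le_of_lt_succ hlt using Nat.decreasingInduction generalizing a b with
  | self => rw [ttil_self_succ, conj_ttN_ttil hj ha hb hab]
  | of_succ i h ih =>
    have hi' : i + 1 < n := by omega
    have hs {k : ℕ} (hk : k < n) : swap i (i + 1) k < n := by
      rw [swap_apply_def]
      split_ifs <;> omega
    have hs' {k : ℕ} (hk : k < n) : swap (i + 1) (j + 1) k < n := by
      rw [swap_apply_def]
      split_ifs <;> omega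
    have hne := (swap i (i + 1)).injective.ne hab.symm
    rw [ttil_eq_mul_mul (by omega), map_mul, map_mul, MulAut.mul_apply, MulAut.mul_apply,
      conj_ttN_ttil hi' ha hb hab, ih (hs hb) (hs ha) hne hi' (by omega) (by omega),
      conj_ttN_ttil hi' (hs' (hs ha)) (hs' (hs hb)) ((swap _ _).injective.ne hne.symm),
      ← swap_mul_swap_mul_swap_left hij (by omega : i + 1 ≠ j + 1)]
    rfl

theorem ttil_mul_self_comm {a b : ℕ} (hab : a ≠ b) :
    ttil n b a * ttil n b a = ttil n a b * ttil n a b := by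
  rw [ttil_comm hab, (commute_zt _).symm.mul_mul_mul_comm, zt_mul_zt, one_mul]

theorem ttil_mul_self {a b : ℕ} (ha : a < n) (hb : b < n) (hab : a ≠ b) :
    ttil n a b * ttil n a b = zt n := by
  wlog hlt : a < b generalizing a b
  · rw [ttil_mul_self_comm hab.symm]
    exact this hb ha hab.symm (by omega)
  obtain ⟨b, rfl⟩ := Nat.exists_eq_add_one.2 (Nat.zero_lt_of_lt hlt)
  induction Nat.le_of_lt_succ hlt using Nat.decreasingInduction with
  | self => rw [ttil_self_succ, ttN_mul_self hb]
  | of_succ a h ih =>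
    rw [← ttil_mul_self_comm hab, ← conj_ttN_ttil_succ_left (by omega) (by omega), ← map_mul,
      ih (by omega) (by omega) (by omega), MulAut.conj_apply, ← (commute_zt _).eq,
      mul_inv_cancel_right]

theorem ttil_mul_ttil {a b c d : Fin n} (hab : a ≠ b) (hcd : c ≠ d) :
    ttil n a b * ttil n c d =
      zt n * (ttil n (swap a b c).val (swap a b d).val * ttil n a b) := by
  have hcd' := Fin.val_ne_of_ne ((swap a b).injective.ne hcd)
  have h := conj_ttil_ttil a.2 b.2 (Fin.val_ne_of_ne hab) c.2 d.2 (Fin.val_ne_of_ne hcd)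
  rw [MulAut.conj_apply, mul_inv_eq_iff_eq_mul, ← Fin.val_injective.map_swap,
    ← Fin.val_injective.map_swap] at h
  rw [h, ttil_comm hcd', mul_assoc]

theorem map_ttN {p : SpinSym n →* Perm (Fin n)}
    (hpt : ∀ i : Fin (n - 1), p (tt n i) = swap (finL n i) (finR n i)) {i : ℕ} (hi : i + 1 < n) :
    p (ttN n i) = swap ⟨i, by omega⟩ ⟨i + 1, hi⟩ := by
  rw [ttN, dif_pos (by omega), hpt, finL, finR]

theorem map_ttil {p : SpinSym n →* Perm (Fin n)}
    (hpt : ∀ i : Fin (n - 1), p (tt n i) = swap (finL n i) (finR n i)) (hpz : p (zt n) = 1)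
    {a b : ℕ} (ha : a < n) (hb : b < n) (hab : a ≠ b) :
    p (ttil n a b) = swap ⟨a, ha⟩ ⟨b, hb⟩ := by
  wlog hlt : a < b generalizing a b
  · rw [ttil_comm hab.symm, map_mul, hpz, one_mul, swap_comm]
    exact this hb ha hab.symm (by omega)
  obtain ⟨b, rfl⟩ := Nat.exists_eq_add_one.2 (Nat.zero_lt_of_lt hlt)
  induction Nat.le_of_lt_succ hlt using Nat.decreasingInduction with
  | self => rw [ttil_self_succ, map_ttN hpt hb]
  | of_succ a h ih =>
    have hlt' : a + 1 < b + 1 := by omega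
    rw [ttil_eq_mul_mul hlt', map_mul, map_mul, map_ttN hpt (by omega),
      ih (by omega) hlt'.ne hlt', swap_mul_swap_mul_swap_left]
    exacts [Fin.ne_of_val_ne hab, Fin.ne_of_val_ne hlt'.ne]

end SpinGroup

section Quotient

variable {n : ℕ}

theorem cls_zt_mul (g : SpinSym n) : cls n (zt n * g) = -cls n g := by
  have h := RingQuot.mkAlgHom_rel (Lam n) (s := spinAlgRel n) ⟨rfl, rfl⟩
  refine eq_neg_of_add_eq_zero_left (G := Ctil n) ?_
  rw [cls, cls, ← map_add, map_mul, ← add_one_mul, map_mul, h, map_zero, zero_mul]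

/-- The class `[g · τ̃_{a,b} · τ̃_{c,d}]`, the term which the juxtaposition `((a, b), (c, d))`
contributes to `∂̃²[g]`, up to its weight. -/
noncomputable def pairCls (g : SpinSym n) (q : (Fin n × Fin n) × (Fin n × Fin n)) : Ctil n :=
  cls n (g * ttil n q.1.1.val q.1.2.val * ttil n q.2.1.val q.2.2.val)

theorem pairCls_hurwitz (g : SpinSym n) {q : (Fin n × Fin n) × (Fin n × Fin n)}
    (hfst : q.1.1 ≠ q.1.2) (hsnd : q.2.1 ≠ q.2.2) : pairCls g (hurwitz q) = -pairCls g q := by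
  have h : pairCls g q = -pairCls g (hurwitz q) := by
    rw [pairCls, mul_assoc, ttil_mul_ttil hfst hsnd, ← mul_assoc g, ← (commute_zt g).eq, mul_assoc,
      cls_zt_mul, ← mul_assoc]
    rfl
  rw [h]
  exact (neg_neg (G := Ctil n) _).symm

theorem pairCls_self (g : SpinSym n) {a b : Fin n} (hab : a ≠ b) :
    pairCls g ((a, b), (a, b)) = -cls n g := by
  rw [pairCls, mul_assoc, ttil_mul_self a.2 b.2 (Fin.val_ne_of_ne hab), ← (commute_zt g).eq,
    cls_zt_mul]

theorem linearMap_ext_cls {M : Type*} [AddCommMonoid M] [Module (Lam n) M]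
    {φ ψ : Ctil n →ₗ[Lam n] M} (h : ∀ g, φ (cls n g) = ψ (cls n g)) : φ = ψ := by
  have hcomp : φ.comp (RingQuot.mkAlgHom (Lam n) (spinAlgRel n)).toLinearMap =
      ψ.comp (RingQuot.mkAlgHom (Lam n) (spinAlgRel n)).toLinearMap :=
    MonoidAlgebra.lhom_ext' fun g => LinearMap.ext_ring (h g)
  exact LinearMap.cancel_right (RingQuot.mkAlgHom_surjective _ _) |>.1 hcomp

end Quotient

theorem differential_squares_to_zero (n : ℕ) (hn : 2 ≤ n) (σO : Equiv.Perm (Fin n))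
    (p : SpinSym n →* Equiv.Perm (Fin n))
    (hpt : ∀ i : Fin (n-1), p (tt n i) = Equiv.swap (finL n i) (finR n i))
    (hpz : p (zt n) = 1)
    (D : Ctil n →ₗ[Lam n] Ctil n)
    (hD : ∀ g : SpinSym n,
      D (cls n g) =
        ∑ a : Fin n, ∑ b : Fin n,
          if a ≠ b ∧ RectEmpty n (p g) a b then
            Umon n σO (p g) a b • cls n (g * ttil n a.val b.val)
          else 0) :
    D.comp D = 0 := by
  have : NeZero n := ⟨by omega⟩
  have hD' (g : SpinSym n) : D (cls n g) =
      ∑ r ∈ emptyRects (p g), Umon n σO (p g) r.1 r.2 • cls n (g * ttil n r.1.val r.2.val) := by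
    rw [hD, emptyRects, Finset.sum_filter, Fintype.sum_prod_type]
  refine linearMap_ext_cls fun g => ?_
  have hDD : D (D (cls n g)) = ∑ q ∈ emptyPairs (p g), pairMon σO (p g) q • pairCls g q := by
    rw [hD', map_sum, emptyPairs, Finset.sum_finset_product _ (emptyRects (p g))
      (fun r => emptyRects (p g * swap r.1 r.2)) (by simp)]
    refine Finset.sum_congr rfl fun r hr => ?_
    rw [emptyRects, Finset.mem_filter_univ] at hr
    rw [map_smul, hD', map_mul, map_ttil hpt hpz r.1.2 r.2.2 (Fin.val_ne_of_ne hr.1),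
      Finset.smul_sum]
    simp only [smul_smul, pairMon, pairCls]
  rw [LinearMap.comp_apply, hDD, sum_emptyPairs hn σO (p g) (fun _ => pairCls_hurwitz g)
    (fun _ _ => pairCls_self g), LinearMap.zero_apply]
end

section
/- Let r(x;a,b) be an empty rectangle connecting the generator x to y = x∘(a b). Then M(x) − M(y) = 1 − 2·(the number of indices m with O_m lying in r(x;a,b)), and for each component i, A_i(x) − A_i(y) = (the number of m ∈ S_i with X_m lying in r(x;a,b)) − (the number of m ∈ S_i with O_m lying in r(x;a,b)). In particular, since the first count is nonnegative, the differential counting empty rectangles drops the Maslov degree by one and respects the Alexander filtration. -/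
open Equiv
open scoped Classical

/-- `I(A, B)` for the families of planar points `A|_S` and `B|_T`:
the number of pairs of points `(p, q)` with `p₁ < q₁` and `p₂ < q₂`. -/
def Icnt (n : ℕ) (A B : Fin n → ℚ × ℚ) (S T : Finset (Fin n)) : ℚ :=
  ∑ a ∈ S, ∑ b ∈ T, if (A a).1 < (B b).1 ∧ (A a).2 < (B b).2 then 1 else 0

/-- `J(A, B) = (I(A, B) + I(B, A)) / 2`. -/
def Jq (n : ℕ) (A B : Fin n → ℚ × ℚ) (S T : Finset (Fin n)) : ℚ :=
  (Icnt n A B S T + Icnt n B A T S) / 2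

/-- The planar lift of a generator `x`: the points `(k, x k)`. -/
def ptsGen (n : ℕ) (x : Equiv.Perm (Fin n)) : Fin n → ℚ × ℚ :=
  fun k => ((k : ℚ), ((x k : ℕ) : ℚ))

/-- The planar lift of the markings placed by `σ`: the points `(m + ½, σ m + ½)`. -/
def ptsMark (n : ℕ) (σ : Equiv.Perm (Fin n)) : Fin n → ℚ × ℚ :=
  fun m => ((m : ℚ) + 1/2, ((σ m : ℕ) : ℚ) + 1/2)

/-- The Maslov degree `M(x) = J(x − O, x − O) + 1`, expanded bilinearly. -/
def Maslov (n : ℕ) (σO : Equiv.Perm (Fin n)) (x : Equiv.Perm (Fin n)) : ℚ :=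
  Jq n (ptsGen n x) (ptsGen n x) Finset.univ Finset.univ
    - 2 * Jq n (ptsGen n x) (ptsMark n σO) Finset.univ Finset.univ
    + Jq n (ptsMark n σO) (ptsMark n σO) Finset.univ Finset.univ + 1

/-- The Alexander degree `A_S(x) = J(x − ½(X + O), X_S − O_S) − (|S| − 1)/2`
associated to the component `S`, expanded bilinearly. -/
def Alex (n : ℕ) (σO σX : Equiv.Perm (Fin n)) (S : Finset (Fin n))
    (x : Equiv.Perm (Fin n)) : ℚ :=
  Jq n (ptsGen n x) (ptsMark n σX) Finset.univ S
    - Jq n (ptsGen n x) (ptsMark n σO) Finset.univ S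
    - (1/2) * Jq n (ptsMark n σX) (ptsMark n σX) Finset.univ S
    + (1/2) * Jq n (ptsMark n σX) (ptsMark n σO) Finset.univ S
    - (1/2) * Jq n (ptsMark n σO) (ptsMark n σX) Finset.univ S
    + (1/2) * Jq n (ptsMark n σO) (ptsMark n σO) Finset.univ S
    - ((S.card : ℚ) - 1) / 2

/-!
Let `y = x ∘ (a b)`. Up to a constant independent of the generator, `4 J(A, B)` is the bilinear
pairing `∑ sign (q₁ - p₁) * sign (q₂ - p₂)` over `p ∈ A` and `q ∈ B`. The four corners of the
rectangle enter `x - y` with alternating signs, so the pairing of `x - y` with a point `q` factors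
as `(sign (q₁ - a) - sign (q₁ - b)) * (sign (q₂ - x a) - sign (q₂ - x b))`. Each factor is
`2 (θ - w)`, where `θ` is the indicator of the cyclic side of the rectangle, equal to `1/2` at the
two ends, and `w` is `1` if that side wraps around the torus and `0` otherwise.

The terms involving `w` depend only on the columns and on the rows occupied by the points, and so
they cancel between any two of `x`, `y`, `O` and, component by component, between `X` and `O`.
What remains is the sum of `θ(q₁) θ(q₂)`: a marking in the rectangle contributes `1`, a generator
point in its interior `1`, and a corner `1/4`.
-/

section Sums

variable {ι R : Type*} [CommRing R]

lemma sum_mul_sub_sum_mul_comp_swap [Fintype ι] [DecidableEq ι] (f u : ι → R) (a b : ι) :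
    ∑ k, f k * u k - ∑ k, f k * u (swap a b k) = (f a - f b) * (u a - u b) := by
  rcases eq_or_ne a b with rfl | hab
  · simp
  rw [← Finset.sum_sub_distrib, Fintype.sum_eq_add a b hab fun k hk => by
    rw [swap_apply_of_ne_of_ne hk.1 hk.2, sub_self], swap_apply_left, swap_apply_right]
  ring

lemma sum_sub_mul_sub_sub_sum_of_sum_eq {s : Finset ι} {u u' v v' : ι → R}
    (hu : ∑ i ∈ s, u i = ∑ i ∈ s, u' i) (hv : ∑ i ∈ s, v i = ∑ i ∈ s, v' i) (c d : R) :
    ∑ i ∈ s, (u i - c) * (v i - d) - ∑ i ∈ s, (u' i - c) * (v' i - d) =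
      ∑ i ∈ s, u i * v i - ∑ i ∈ s, u' i * v' i := by
  simp only [sub_mul, mul_sub, Finset.sum_sub_distrib, ← Finset.mul_sum, ← Finset.sum_mul, hu, hv]
  ring

lemma sum_comp_eq_of_inv_mul_mem_iff {M : Type*} [AddCommMonoid M] {σ τ : Perm ι} {S : Finset ι}
    (hS : ∀ m, (τ⁻¹ * σ) m ∈ S ↔ m ∈ S) (f : ι → M) :
    ∑ m ∈ S, f (σ m) = ∑ m ∈ S, f (τ m) :=
  Finset.sum_equiv (τ⁻¹ * σ) (fun m => (hS m).symm) fun m _ => by simp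

end Sums

/-- The sign of `q - p` as a rational number: the one-dimensional kernel of `signPairing`. -/
def ordSign (p q : ℚ) : ℚ := SignType.sign (q - p)

lemma ordSign_of_lt {p q : ℚ} (h : p < q) : ordSign p q = 1 := by
  simp [ordSign, sign_pos (sub_pos.2 h)]

lemma ordSign_of_gt {p q : ℚ} (h : q < p) : ordSign p q = -1 := by
  simp [ordSign, sign_neg (sub_neg.2 h)]

lemma ordSign_self (p : ℚ) : ordSign p p = 0 := by
  simp [ordSign]

lemma ordSign_antisymm (p q : ℚ) : ordSign q p = -ordSign p q := by
  rw [ordSign, ordSign, ← neg_sub q p, Left.sign_neg, SignType.coe_neg]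

section SignPairing

variable {ι κ : Type*}

/-- The bilinear pairing of the planar families `A|_S` and `B|_T` in terms of which `J` is
expressed by `Jq_eq_signPairing`. Unlike `J`, it factors on the corners of a rectangle. -/
def signPairing (A : ι → ℚ × ℚ) (B : κ → ℚ × ℚ) (S : Finset ι) (T : Finset κ) : ℚ :=
  ∑ i ∈ S, ∑ j ∈ T, ordSign (A i).1 (B j).1 * ordSign (A i).2 (B j).2

lemma signPairing_comm (A : ι → ℚ × ℚ) (B : κ → ℚ × ℚ) (S : Finset ι) (T : Finset κ) :
    signPairing A B S T = signPairing B A T S := by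
  rw [signPairing, Finset.sum_comm]
  refine Finset.sum_congr rfl fun j _ => Finset.sum_congr rfl fun i _ => ?_
  rw [ordSign_antisymm (B j).1, ordSign_antisymm (B j).2, neg_mul_neg]

end SignPairing

lemma ite_lt_add_ite_gt (p q : ℚ × ℚ) :
    ((if p.1 < q.1 ∧ p.2 < q.2 then 1 else 0) + if q.1 < p.1 ∧ q.2 < p.2 then 1 else 0 : ℚ) =
      ((if p.1 ≠ q.1 ∧ p.2 ≠ q.2 then 1 else 0) + ordSign p.1 q.1 * ordSign p.2 q.2) / 2 := by
  obtain ⟨p₁, p₂⟩ := p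
  obtain ⟨q₁, q₂⟩ := q
  rcases lt_trichotomy p₁ q₁ with h₁ | rfl | h₁ <;>
    rcases lt_trichotomy p₂ q₂ with h₂ | rfl | h₂ <;>
    simp [*, LT.lt.ne, LT.lt.ne', LT.lt.not_gt, ordSign_self, ordSign_of_lt, ordSign_of_gt]

lemma Jq_eq_signPairing (n : ℕ) (A B : Fin n → ℚ × ℚ) (S T : Finset (Fin n)) :
    Jq n A B S T =
      ((∑ i ∈ S, ∑ j ∈ T, if (A i).1 ≠ (B j).1 ∧ (A i).2 ≠ (B j).2 then 1 else 0) +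
        signPairing A B S T) / 4 := by
  have hI : Icnt n B A T S =
      ∑ i ∈ S, ∑ j ∈ T, if (B j).1 < (A i).1 ∧ (B j).2 < (A i).2 then 1 else 0 :=
    Finset.sum_comm
  rw [Jq, hI, Icnt, signPairing, ← Finset.sum_add_distrib, ← Finset.sum_add_distrib]
  simp only [← Finset.sum_add_distrib, ite_lt_add_ite_gt, ← Finset.sum_div]
  ring

section Generators

variable {n : ℕ}

lemma Jq_ptsGen_self (x : Perm (Fin n)) :
    Jq n (ptsGen n x) (ptsGen n x) Finset.univ Finset.univ =
      (n * (n - 1) + signPairing (ptsGen n x) (ptsGen n x) Finset.univ Finset.univ) / 4 := by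
  have hne (k l : Fin n) : (if k = l then 0 else 1 : ℚ) = 1 - if k = l then 1 else 0 := by
    split_ifs <;> norm_num
  simp [Jq_eq_signPairing, ptsGen, Fin.val_inj, hne, mul_sub]

lemma natCast_ne_natCast_add_half (p q : ℕ) : (p : ℚ) ≠ q + 1 / 2 := by
  intro h
  have h' : ((2 * p : ℕ) : ℚ) = (2 * q + 1 : ℕ) := by push_cast; linarith
  have : 2 * p = 2 * q + 1 := by exact_mod_cast h'
  omega

lemma Jq_ptsGen_ptsMark (x σ : Perm (Fin n)) (S : Finset (Fin n)) :
    Jq n (ptsGen n x) (ptsMark n σ) Finset.univ S =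
      (n * S.card + signPairing (ptsGen n x) (ptsMark n σ) Finset.univ S) / 4 := by
  simp [Jq_eq_signPairing, ptsGen, ptsMark, -one_div, natCast_ne_natCast_add_half]

lemma signPairing_ptsGen_sub_mul_swap {κ : Type*} (x : Perm (Fin n)) (a b : Fin n)
    (B : κ → ℚ × ℚ) (T : Finset κ) :
    signPairing (ptsGen n x) B Finset.univ T -
        signPairing (ptsGen n (x * swap a b)) B Finset.univ T =
      ∑ j ∈ T, (ordSign a (B j).1 - ordSign b (B j).1) *
        (ordSign (x a) (B j).2 - ordSign (x b) (B j).2) := by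
  rw [signPairing_comm, signPairing_comm (ptsGen n (x * swap a b)), signPairing, signPairing,
    ← Finset.sum_sub_distrib]
  refine Finset.sum_congr rfl fun j _ => ?_
  have hcorners := sum_mul_sub_sum_mul_comp_swap (fun k : Fin n => ordSign (B j).1 k)
    (fun k => ordSign (B j).2 (x k)) a b
  simp only [ptsGen, Perm.mul_apply]
  rw [hcorners, ordSign_antisymm a, ordSign_antisymm b, ordSign_antisymm (x a),
    ordSign_antisymm (x b)]
  ring

end Generators

section CyclicInterval

variable {n : ℕ}

/-- The indicator of the half-open cyclic interval from `a` to `b`. -/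
def cyclicInd (a b k : Fin n) : ℚ :=
  if (k - a).val < (b - a).val then 1 else 0

/-- The indicator of the cyclic interval from `a` to `b`, normalized to `1/2` at both ends; it
plays for generator points the role of `cyclicInd` for markings, which never lie on a grid line. -/
def cyclicMid (a b k : Fin n) : ℚ :=
  if k = a ∨ k = b then 1 / 2 else cyclicInd a b k

/-- Whether the cyclic interval from `a` to `b` wraps around: `1` if it does, `0` otherwise. -/
def wrapInd (a b : Fin n) : ℚ :=
  if b < a then 1 else 0

lemma cyclicInd_sub_wrapInd (a b k : Fin n) :
    cyclicInd a b k - wrapInd a b = (if a ≤ k then 1 else 0) - if b ≤ k then 1 else 0 := by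
  have hk := Fin.intCast_val_sub_eq_sub_add_ite k a
  have hb := Fin.intCast_val_sub_eq_sub_add_ite b a
  simp only [cyclicInd, wrapInd, Fin.le_def, Fin.lt_def] at *
  split_ifs at * <;> first | omega | norm_num

lemma cyclicInd_left {a b : Fin n} (hab : a ≠ b) : cyclicInd a b a = 1 := by
  have : NeZero n := ⟨a.pos.ne'⟩
  simp [cyclicInd, Fin.pos_iff_ne_zero, sub_ne_zero, hab.symm]

lemma cyclicInd_right (a b : Fin n) : cyclicInd a b b = 0 := by
  simp [cyclicInd]

lemma cyclicInd_mul_cyclicInd (a b c d k l : Fin n) :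
    cyclicInd a b k * cyclicInd c d l =
      if (k - a).val < (b - a).val ∧ (l - c).val < (d - c).val then 1 else 0 := by
  simp only [cyclicInd, ite_zero_mul_ite_zero, mul_one]

lemma ordSign_fin_add_half (a m : Fin n) :
    ordSign a (m + 1 / 2) = 2 * (if a ≤ m then 1 else 0) - 1 := by
  split_ifs with h
  · have : (a : ℚ) ≤ m := by exact_mod_cast h
    rw [ordSign_of_lt (by linarith)]
    norm_num
  · have : (m : ℚ) + 1 ≤ a := by exact_mod_cast not_le.1 h
    rw [ordSign_of_gt (by linarith)]
    norm_num

lemma ordSign_fin_of_ne {a k : Fin n} (h : k ≠ a) :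
    ordSign a k = 2 * (if a ≤ k then 1 else 0) - 1 := by
  rcases h.lt_or_gt with hlt | hgt
  · rw [ordSign_of_gt (by exact_mod_cast hlt), if_neg hlt.not_ge]
    norm_num
  · rw [ordSign_of_lt (by exact_mod_cast hgt), if_pos hgt.le]
    norm_num

lemma ordSign_sub_ordSign_fin_add_half (a b m : Fin n) :
    ordSign a (m + 1 / 2) - ordSign b (m + 1 / 2) = 2 * (cyclicInd a b m - wrapInd a b) := by
  rw [ordSign_fin_add_half, ordSign_fin_add_half, cyclicInd_sub_wrapInd]
  ring

lemma ordSign_sub_ordSign_fin {a b : Fin n} (hab : a ≠ b) (k : Fin n) :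
    ordSign a k - ordSign b k = 2 * (cyclicMid a b k - wrapInd a b) := by
  rcases eq_or_ne k a with rfl | ha
  · rw [ordSign_self, ordSign_fin_of_ne hab, cyclicMid, if_pos (Or.inl rfl), wrapInd]
    simp only [hab.symm.le_iff_lt]
    ring
  rcases eq_or_ne k b with rfl | hb
  · rw [ordSign_self, ordSign_fin_of_ne hab.symm, cyclicMid, if_pos (Or.inr rfl), wrapInd]
    simp only [← not_lt]
    split_ifs <;> norm_num
  · rw [ordSign_fin_of_ne ha, ordSign_fin_of_ne hb, cyclicMid, if_neg (not_or.2 ⟨ha, hb⟩),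
      cyclicInd_sub_wrapInd]
    ring

lemma sum_cyclicMid {a b : Fin n} (hab : a ≠ b) : ∑ k, cyclicMid a b k = ∑ k, cyclicInd a b k := by
  rw [← sub_eq_zero, ← Finset.sum_sub_distrib, Fintype.sum_eq_add a b hab fun k hk => by
    rw [cyclicMid, if_neg (not_or.2 hk), sub_self], cyclicInd_left hab, cyclicInd_right]
  norm_num [cyclicMid]

lemma cyclicMid_swap (a b k : Fin n) : cyclicMid a b (swap a b k) = cyclicMid a b k := by
  by_cases ha : k = a
  · simp [ha, cyclicMid]
  by_cases hb : k = b
  · simp [hb, cyclicMid]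
  rw [swap_apply_of_ne_of_ne ha hb]

end CyclicInterval

section Rectangles

variable {n : ℕ}

lemma signPairing_ptsMark_sub_mul_swap (x σ : Perm (Fin n)) (a b : Fin n) (S : Finset (Fin n)) :
    signPairing (ptsGen n x) (ptsMark n σ) Finset.univ S -
        signPairing (ptsGen n (x * swap a b)) (ptsMark n σ) Finset.univ S =
      4 * ∑ m ∈ S, (cyclicInd a b m - wrapInd a b) *
        (cyclicInd (x a) (x b) (σ m) - wrapInd (x a) (x b)) := by
  rw [signPairing_ptsGen_sub_mul_swap, Finset.mul_sum]
  refine Finset.sum_congr rfl fun m _ => ?_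
  simp only [ptsMark, ordSign_sub_ordSign_fin_add_half]
  ring

lemma signPairing_ptsGen_ptsGen_sub_mul_swap (x z : Perm (Fin n)) {a b : Fin n} (hab : a ≠ b) :
    signPairing (ptsGen n x) (ptsGen n z) Finset.univ Finset.univ -
        signPairing (ptsGen n (x * swap a b)) (ptsGen n z) Finset.univ Finset.univ =
      4 * ∑ k, (cyclicMid a b k - wrapInd a b) *
        (cyclicMid (x a) (x b) (z k) - wrapInd (x a) (x b)) := by
  rw [signPairing_ptsGen_sub_mul_swap, Finset.mul_sum]
  refine Finset.sum_congr rfl fun k _ => ?_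
  simp only [ptsGen, ordSign_sub_ordSign_fin hab, ordSign_sub_ordSign_fin (x.injective.ne hab)]
  ring

lemma signPairing_ptsGen_self_sub_mul_swap (x : Perm (Fin n)) {a b : Fin n} (hab : a ≠ b) :
    signPairing (ptsGen n x) (ptsGen n x) Finset.univ Finset.univ -
        signPairing (ptsGen n (x * swap a b)) (ptsGen n (x * swap a b))
          Finset.univ Finset.univ =
      8 * ∑ k, (cyclicMid a b k - wrapInd a b) *
        (cyclicMid (x a) (x b) (x k) - wrapInd (x a) (x b)) := by
  have hx := signPairing_ptsGen_ptsGen_sub_mul_swap x x hab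
  have hy := signPairing_ptsGen_ptsGen_sub_mul_swap x (x * swap a b) hab
  have hcorners (k : Fin n) : cyclicMid (x a) (x b) ((x * swap a b) k) =
      cyclicMid (x a) (x b) (x k) := by
    rw [mul_swap_eq_swap_mul, Perm.mul_apply, cyclicMid_swap]
  simp only [hcorners] at hy
  rw [signPairing_comm (ptsGen n x)] at hy
  linear_combination hx + hy

/-- The points of the generator `x` in the open rectangle `r(x; a, b)`, given by their columns. -/
def rectInterior (x : Perm (Fin n)) (a b : Fin n) : Finset (Fin n) :=
  Finset.univ.filter fun k => k ≠ a ∧ k ≠ b ∧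
    (k - a).val < (b - a).val ∧ (x k - x a).val < (x b - x a).val

lemma rectInterior_eq_empty_iff (x : Perm (Fin n)) (a b : Fin n) :
    rectInterior x a b = ∅ ↔ RectEmpty n x a b := by
  simp [rectInterior, RectEmpty, Finset.filter_eq_empty_iff]

lemma sum_cyclicMid_mul_cyclicMid (x : Perm (Fin n)) {a b : Fin n} (hab : a ≠ b) :
    ∑ k, cyclicMid a b k * cyclicMid (x a) (x b) (x k) =
      1 / 2 + (rectInterior x a b).card := by
  have hterm (k : Fin n) : cyclicMid a b k * cyclicMid (x a) (x b) (x k) =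
      (if k = a then 1 / 4 else 0) + (if k = b then 1 / 4 else 0) +
        if k ∈ rectInterior x a b then 1 else 0 := by
    by_cases ha : k = a
    · norm_num [ha, hab, cyclicMid, rectInterior]
    by_cases hb : k = b
    · norm_num [hb, hab.symm, cyclicMid, rectInterior]
    simp [ha, hb, cyclicMid, cyclicInd_mul_cyclicInd, rectInterior]
  simp only [hterm, Finset.sum_add_distrib, Finset.sum_ite_eq', Finset.mem_univ, if_true,
    Finset.sum_boole, Finset.filter_univ_mem]
  norm_num

lemma sum_cntMark (σ x : Perm (Fin n)) (a b : Fin n) (S : Finset (Fin n)) :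
    ((∑ m ∈ S, cntMark n σ x a b m : ℕ) : ℚ) =
      ∑ m ∈ S, cyclicInd a b m * cyclicInd (x a) (x b) (σ m) := by
  simp only [cntMark, cyclicInd_mul_cyclicInd, Nat.cast_sum, Nat.cast_ite, Nat.cast_one,
    Nat.cast_zero]

lemma Maslov_sub_mul_swap (σO x : Perm (Fin n)) {a b : Fin n} (hab : a ≠ b) :
    Maslov n σO x - Maslov n σO (x * swap a b) =
      1 + 2 * (rectInterior x a b).card - 2 * ((∑ m, cntMark n σO x a b m : ℕ) : ℚ) := by
  have hself := signPairing_ptsGen_self_sub_mul_swap x hab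
  have hmark := signPairing_ptsMark_sub_mul_swap x σO a b Finset.univ
  have hrows : ∑ k, cyclicMid (x a) (x b) (x k) = ∑ m, cyclicInd (x a) (x b) (σO m) := by
    rw [Equiv.sum_comp x (cyclicMid (x a) (x b)), Equiv.sum_comp σO (cyclicInd (x a) (x b)),
      sum_cyclicMid (x.injective.ne hab)]
  have hwrap := sum_sub_mul_sub_sub_sum_of_sum_eq (sum_cyclicMid hab) hrows
    (wrapInd a b) (wrapInd (x a) (x b))
  rw [sum_cyclicMid_mul_cyclicMid x hab, ← sum_cntMark] at hwrap
  simp only [Maslov, Jq_ptsGen_self, Jq_ptsGen_ptsMark]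
  linear_combination hself / 4 - hmark / 2 + 2 * hwrap

lemma Alex_sub_mul_swap (σO σX x : Perm (Fin n)) (a b : Fin n) {S : Finset (Fin n)}
    (hS : ∀ m, (σX⁻¹ * σO) m ∈ S ↔ m ∈ S) :
    Alex n σO σX S x - Alex n σO σX S (x * swap a b) =
      ((∑ m ∈ S, cntMark n σX x a b m : ℕ) : ℚ) - ((∑ m ∈ S, cntMark n σO x a b m : ℕ) : ℚ) := by
  have hX := signPairing_ptsMark_sub_mul_swap x σX a b S
  have hO := signPairing_ptsMark_sub_mul_swap x σO a b S
  have hrows := sum_comp_eq_of_inv_mul_mem_iff hS (cyclicInd (x a) (x b))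
  have hwrap := sum_sub_mul_sub_sub_sum_of_sum_eq (u := cyclicInd a b) rfl hrows
    (wrapInd a b) (wrapInd (x a) (x b))
  rw [← sum_cntMark, ← sum_cntMark] at hwrap
  simp only [Alex, Jq_ptsGen_ptsMark]
  linear_combination hX / 4 - hO / 4 - hwrap

end Rectangles

theorem rectangle_degree_change_general {n : ℕ} (σO σX x : Perm (Fin n)) {a b : Fin n}
    (hab : a ≠ b) :
    Maslov n σO x - Maslov n σO (x * swap a b) =
      1 + 2 * (rectInterior x a b).card - 2 * ((∑ m, cntMark n σO x a b m : ℕ) : ℚ) ∧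
    ∀ S : Finset (Fin n), (∀ m, (σX⁻¹ * σO) m ∈ S ↔ m ∈ S) →
      Alex n σO σX S x - Alex n σO σX S (x * swap a b) =
        ((∑ m ∈ S, cntMark n σX x a b m : ℕ) : ℚ) -
        ((∑ m ∈ S, cntMark n σO x a b m : ℕ) : ℚ) :=
  ⟨Maslov_sub_mul_swap σO x hab, fun _ => Alex_sub_mul_swap σO σX x a b⟩

theorem rectangle_degree_change (n : ℕ) (hn : 1 ≤ n) (σO σX : Equiv.Perm (Fin n))
    (hXO : ∀ m, σX m ≠ σO m)
    (x : Equiv.Perm (Fin n)) (a b : Fin n) (hab : a ≠ b)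
    (hempty : RectEmpty n x a b) :
    Maslov n σO x - Maslov n σO (x * Equiv.swap a b) =
      1 - 2 * ((∑ m : Fin n, cntMark n σO x a b m : ℕ) : ℚ) ∧
    ∀ m0 : Fin n,
      Alex n σO σX (Finset.univ.filter fun k => (σX⁻¹ * σO).SameCycle m0 k) x -
        Alex n σO σX (Finset.univ.filter fun k => (σX⁻¹ * σO).SameCycle m0 k)
          (x * Equiv.swap a b) =
      ((∑ m ∈ Finset.univ.filter fun k => (σX⁻¹ * σO).SameCycle m0 k,
          cntMark n σX x a b m : ℕ) : ℚ) -
      ((∑ m ∈ Finset.univ.filter fun k => (σX⁻¹ * σO).SameCycle m0 k,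
          cntMark n σO x a b m : ℕ) : ℚ) := by
  obtain ⟨hMaslov, hAlex⟩ := rectangle_degree_change_general σO σX x hab
  rw [(rectInterior_eq_empty_iff x a b).2 hempty] at hMaslov
  exact ⟨by simpa using hMaslov, fun m₀ => hAlex _ fun m => by
    simp only [Finset.mem_filter, Finset.mem_univ, true_and, Perm.sameCycle_apply_right]⟩
end
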